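/- arXiv:math/0402395 — 2 statements merged into one kernel-verified Lean document; each statement's English description precedes it below -/
import Mathlib

section
/- Let r, k be integers with r ≥ 1 and k ≥ −1, and let G be an undirected graph without loops. If the polyhedral complex Hom(C_{2r+1}, G) is k-connected, then the chromatic number of G satisfies χ(G) ≥ k + 4. -/
open Finset

noncomputable section
namespace Lovasz




structure Graph where
  V : Type
  fintypeV : Fintype V
  adj : V → V → Prop
  symm : ∀ {x y : V}, adj x y → adj y x

attribute [instance] Graph.fintypeV

def Graph.Loopless (G : Graph) : Prop := ∀ v : G.V, ¬ G.adj v v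

def GraphHom (G H : Graph) : Type :=
  {f : G.V → H.V // ∀ x y : G.V, G.adj x y → H.adj (f x) (f y)}

@[reducible] def completeGraph (n : ℕ) : Graph where
  V := Fin n
  fintypeV := inferInstance
  adj x y := x ≠ y
  symm h := h.symm

def chromaticNumber (G : Graph) : ℕ :=
  sInf {n : ℕ | Nonempty (GraphHom G (completeGraph n))}

@[reducible] def oddCycle (r : ℕ) : Graph where
  V := ZMod (2 * r + 1)
  fintypeV := inferInstance
  adj x y := x = y + 1 ∨ y = x + 1
  symm h := h.symm

/-- The cycle with `m` vertices (trivial graph for `m = 0`). -/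
@[reducible] def cycleGraph : ℕ → Graph
  | 0 => ⟨Empty, inferInstance, fun _ _ => False, fun h => h⟩
  | (n+1) =>
    { V := ZMod (n+1)
      fintypeV := inferInstance
      adj := fun x y => x = y + 1 ∨ y = x + 1
      symm := fun h => h.symm }

/-- The geometric realization of the polyhedral complex `Hom(G,H)`: the space of functions
assigning to each vertex of `G` a probability distribution on `V(H)`, such that any choice of
vertices from the supports yields a graph homomorphism. -/
abbrev HomComplex (G H : Graph) : Type :=
  {f : G.V → H.V → ℝ //
    (∀ v w, 0 ≤ f v w) ∧ (∀ v, ∑ w, f v w = 1) ∧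
    ∀ x y : G.V, G.adj x y → ∀ a b : H.V, f x a ≠ 0 → f y b ≠ 0 → H.adj a b}

/-- The geometric realization of the simplicial complex `Hom₊(G,H)`. -/
abbrev HomPlus (G H : Graph) : Type :=
  {f : G.V → H.V → ℝ //
    (∀ v w, 0 ≤ f v w) ∧ (∑ v, ∑ w, f v w = 1) ∧
    ∀ x y : G.V, G.adj x y → ∀ a b : H.V, f x a ≠ 0 → f y b ≠ 0 → H.adj a b}

/-- The geometric realization of the independence complex `Ind(G)`. -/
abbrev IndSpace (G : Graph) : Type :=
  {f : G.V → ℝ //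
    (∀ v, 0 ≤ f v) ∧ (∑ v, f v = 1) ∧
    ∀ x y : G.V, G.adj x y → f x = 0 ∨ f y = 0}

/-- The map `Hom(G',H) → Hom(G,H)` induced by a graph homomorphism `ι : G → G'`. -/
def precompHom {G G' : Graph} (ι : GraphHom G G') (H : Graph) :
    C(HomComplex G' H, HomComplex G H) where
  toFun f := ⟨fun v w => f.1 (ι.1 v) w,
    fun v w => f.2.1 (ι.1 v) w,
    fun v => f.2.2.1 (ι.1 v),
    fun x y h a b ha hb => f.2.2.2 (ι.1 x) (ι.1 y) (ι.2 x y h) a b ha hb⟩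
  continuous_toFun := by
    apply Continuous.subtype_mk
    apply continuous_pi; intro v
    apply continuous_pi; intro w
    exact (continuous_apply w).comp ((continuous_apply (ι.1 v)).comp continuous_subtype_val)

/-- The map `Hom₊(G',H) → Hom₊(G,H)` induced by an *invertible* graph homomorphism is only used
for involutions, where precomposition preserves the normalization; for bijective `ι` the total
sum is preserved. -/
def precompHomPlus {G : Graph} (ι : GraphHom G G) (hbij : Function.Bijective ι.1) (H : Graph) :
    C(HomPlus G H, HomPlus G H) where
  toFun f := ⟨fun v w => f.1 (ι.1 v) w,
    fun v w => f.2.1 (ι.1 v) w,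
    by
      show ∑ v, ∑ w, f.1 (ι.1 v) w = 1
      have h2 : ∑ v, ∑ w, f.1 (ι.1 v) w = ∑ v, ∑ w, f.1 v w :=
        Fintype.sum_bijective ι.1 hbij _ _ (fun v => rfl)
      rw [h2]; exact f.2.2.1,
    fun x y h a b ha hb => f.2.2.2 (ι.1 x) (ι.1 y) (ι.2 x y h) a b ha hb⟩
  continuous_toFun := by
    apply Continuous.subtype_mk
    apply continuous_pi; intro v
    apply continuous_pi; intro w
    exact (continuous_apply w).comp ((continuous_apply (ι.1 v)).comp continuous_subtype_val)

lemma precompHom_invol {G : Graph} (γ : GraphHom G G) (hγ : ∀ v, γ.1 (γ.1 v) = v) (H : Graph) :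
    ∀ f, precompHom γ H (precompHom γ H f) = f := by
  intro f
  apply Subtype.ext
  funext v w
  show f.1 (γ.1 (γ.1 v)) w = f.1 v w
  rw [hγ]

lemma precompHomPlus_invol {G : Graph} (γ : GraphHom G G) (hbij : Function.Bijective γ.1)
    (hγ : ∀ v, γ.1 (γ.1 v) = v) (H : Graph) :
    ∀ f, precompHomPlus γ hbij H (precompHomPlus γ hbij H f) = f := by
  intro f
  apply Subtype.ext
  funext v w
  show f.1 (γ.1 (γ.1 v)) w = f.1 v w
  rw [hγ]

/-- The reflection `x ↦ -x` of the odd cycle. -/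
def cycleReflect (r : ℕ) : GraphHom (oddCycle r) (oddCycle r) :=
  ⟨fun x => (-x : ZMod (2 * r + 1)), by
    intro x y h
    change (x : ZMod (2 * r + 1)) = y + 1 ∨ y = x + 1 at h
    change (-x : ZMod (2 * r + 1)) = -y + 1 ∨ (-y : ZMod (2 * r + 1)) = -x + 1
    rcases h with h | h
    · right; rw [h]; ring
    · left; rw [h]; ring⟩

lemma cycleReflect_invol (r : ℕ) : ∀ v, (cycleReflect r).1 ((cycleReflect r).1 v) = v :=
  fun v => neg_neg (v : ZMod (2 * r + 1))

lemma cycleReflect_bijective (r : ℕ) : Function.Bijective (cycleReflect r).1 :=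
  Function.Involutive.bijective (fun v => neg_neg (v : ZMod (2 * r + 1)))

open scoped Topology in
/-- `k`-connectedness (`k ≥ -1`): nonempty, path-connected (when `k ≥ 0`), and all homotopy
groups `π_i` vanish for `1 ≤ i ≤ k`. -/
def KConnected (k : ℤ) (X : Type) [TopologicalSpace X] : Prop :=
  Nonempty X ∧ ((0:ℤ) ≤ k → PathConnectedSpace X) ∧
    ∀ i : ℕ, 1 ≤ i → (i : ℤ) ≤ k → ∀ x : X, Subsingleton (HomotopyGroup (Fin i) X x)

/-!
Let `ρ` be the involution of `X = Hom(C_{2r+1}, G)` induced by the reflection of the odd cycle.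

A colouring of `G` by `d + 2` colours turns a point of `X` into probability distributions on the
colours at the vertices of the cycle. Going once around the cycle, the differences of consecutive
distributions, taken with alternating signs and interpolated linearly, never vanish, because the
support at a vertex is disjoint from the supports at its neighbours. The coordinates of a difference
sum to zero, so normalising gives a homotopy `H : X × I → S^d`; it is reversed by `ρ` and, as the
cycle is odd, ends at the antipode of its start.

If `X` is `(d - 1)`-connected, then it contains the upper hemisphere of an equivariant map
`S^d → X`, built one dimension at a time. Restricting `H` to it gives a map `U` from a cube of
dimension `d + 1` to `S^d`. Give each point of the sphere the signs of its `d + 1` coordinates,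
regarded as `0`-cochains modulo `2` that change by one under the antipode. Stokes' theorem modulo
`2`, on a grid in the cube, shows that the cup product of the coboundaries of these signs takes the
value one on an odd number of cells; so on some cell every coordinate of `U` changes sign. On a fine
grid all coordinates are then small at that cell, which is impossible on the sphere.
-/

section Cochains

variable {n : ℕ} {P : Type*}

/-- A combinatorial `n`-cube in `P`, given by its vertices. -/
abbrev VertexCube (n : ℕ) (P : Type*) : Type _ := (Fin n → Bool) → P

/-- Cubical `n`-cochains on `P` with coefficients in `ZMod 2`. -/
abbrev Cochain (n : ℕ) (P : Type*) : Type _ := VertexCube n P → ZMod 2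

namespace VertexCube

/-- The face of a cube on which the `j`-th coordinate equals `c`. -/
def face (g : VertexCube (n + 1) P) (j : Fin (n + 1)) (c : Bool) : VertexCube n P :=
  fun b => g (j.insertNth c b)

lemma face_face (g : VertexCube (n + 2) P) (j : Fin (n + 2)) (i : Fin (n + 1)) (c c' : Bool) :
    (g.face (j.succAbove i) c').face (i.predAbove j) c = (g.face j c).face i c' := by
  funext b
  refine congrArg g (Fin.insertNth_eq_iff.2 ⟨by simp, (Fin.insertNth_eq_iff.2 ⟨?_, ?_⟩)⟩)
  · simp [Fin.removeNth, Fin.succAbove_succAbove_predAbove]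
  · funext k
    simp [Fin.removeNth, Fin.succAbove_succAbove_succAbove_predAbove]

lemma face_true_top (g : VertexCube (n + 1) P) (j : Fin (n + 1)) : g.face j true ⊤ = g ⊤ :=
  congrArg g (Fin.insertNth_eq_iff.2 ⟨rfl, rfl⟩)

end VertexCube

namespace Cochain

/-- The coboundary of a cubical cochain. -/
def coboundary (β : Cochain n P) : Cochain (n + 1) P :=
  fun g => ∑ j, (β (g.face j true) + β (g.face j false))

/-- The cup product of a cochain with a `0`-cochain, evaluated at the last vertex of a cube. -/
def cup (β : Cochain n P) (s : P → ZMod 2) : Cochain n P := fun g => β g * s (g ⊤)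

lemma coboundary_coboundary (β : Cochain n P) : β.coboundary.coboundary = 0 := by
  funext g
  simp only [coboundary, ← sum_add_distrib]
  rw [← sum_product', univ_product_univ]
  -- Both orders of restricting two coordinates give the same face of codimension two.
  refine sum_involution (fun x _ => (x.1.succAbove x.2, x.2.predAbove x.1)) ?_ ?_ ?_ ?_
  · rintro ⟨j, i⟩ -
    simp only [VertexCube.face_face]
    grind [CharTwo.add_self_eq_zero]
  · rintro ⟨j, i⟩ - - h
    exact Fin.succAbove_ne j i (congrArg Prod.fst h)
  · exact fun _ _ => mem_univ _
  · rintro ⟨j, i⟩ -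
    simp [Fin.succAbove_succAbove_predAbove, Fin.predAbove_predAbove_succAbove]

lemma coboundary_cup (β : Cochain n P) (s : P → ZMod 2) (g : VertexCube (n + 1) P) :
    (β.cup s).coboundary g = β.coboundary g * s (g ⊤) +
      ∑ j, β (g.face j false) * (s (g ⊤) + s (g.face j false ⊤)) := by
  simp only [coboundary, cup, sum_mul, ← sum_add_distrib, VertexCube.face_true_top]
  refine sum_congr rfl fun j _ => ?_
  linear_combination -CharTwo.add_self_eq_zero (β (g.face j false) * s (g ⊤))

/-- The cocycle `δ(s 0) ⌣ ⋯ ⌣ δ(s (n - 1))` of a family of `0`-cochains. The last factor is split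
off as `W ⌣ δt = δ(W ⌣ t)`, which is legitimate since `W` is a cocycle. -/
def signCocycle : {n : ℕ} → (Fin n → P → ZMod 2) → Cochain n P
  | 0, _ => 1
  | n + 1, s => ((signCocycle (Fin.init s)).cup (s (Fin.last n))).coboundary

/-- The primitive `δ(s 0) ⌣ ⋯ ⌣ δ(s (n - 1)) ⌣ s n` of the cocycle of the family `s`. -/
def signPrimitive (s : Fin (n + 1) → P → ZMod 2) : Cochain n P :=
  (signCocycle (Fin.init s)).cup (s (Fin.last n))

lemma coboundary_signPrimitive (s : Fin (n + 1) → P → ZMod 2) :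
    (signPrimitive s).coboundary = signCocycle s := rfl

lemma coboundary_signCocycle : ∀ {n : ℕ} (s : Fin n → P → ZMod 2),
    (signCocycle s).coboundary = 0
  | 0, _ => by
    funext g
    simp [coboundary, signCocycle, CharTwo.add_self_eq_zero]
  | _ + 1, _ => coboundary_coboundary _

lemma signCocycle_succ_apply (s : Fin (n + 1) → P → ZMod 2) (g : VertexCube (n + 1) P) :
    signCocycle s g = ∑ j, signCocycle (Fin.init s) (g.face j false) *
      (s (Fin.last n) (g ⊤) + s (Fin.last n) (g.face j false ⊤)) := by
  rw [← coboundary_signPrimitive, signPrimitive, coboundary_cup, coboundary_signCocycle,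
    Pi.zero_apply, zero_mul, zero_add]

lemma exists_ne_of_signCocycle_ne_zero : ∀ {n : ℕ} (s : Fin n → P → ZMod 2) (g : VertexCube n P),
    signCocycle s g ≠ 0 → ∀ i, ∃ b b', s i (g b) ≠ s i (g b')
  | 0, _, _, _, i => i.elim0
  | n + 1, s, g, hg, i => by
    rw [signCocycle_succ_apply] at hg
    obtain ⟨j, -, hj⟩ := exists_ne_zero_of_sum_ne_zero hg
    cases i using Fin.lastCases with
    | last =>
      refine ⟨⊤, j.insertNth false ⊤, fun h => right_ne_zero_of_mul hj ?_⟩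
      rw [h]
      exact CharTwo.add_self_eq_zero _
    | cast i =>
      obtain ⟨b, b', h⟩ := exists_ne_of_signCocycle_ne_zero _ _ (left_ne_zero_of_mul hj) i
      exact ⟨_, _, h⟩

lemma signCocycle_eq_zero_of_face_eq : ∀ {n : ℕ} (s : Fin (n + 1) → P → ZMod 2)
    (g : VertexCube (n + 1) P) (i : Fin (n + 1)), g.face i true = g.face i false →
    signCocycle s g = 0
  | 0, s, g, i, hg => by
    obtain rfl : i = 0 := Fin.fin_one_eq_zero i
    simp [← coboundary_signPrimitive, coboundary, hg, CharTwo.add_self_eq_zero]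
  | n + 1, s, g, i, hg => by
    have hzero (j c) : signCocycle (Fin.init s) (g.face (i.succAbove j) c) = 0 :=
      signCocycle_eq_zero_of_face_eq _ _ (j.predAbove i) <| by
        rw [VertexCube.face_face, VertexCube.face_face, hg]
    rw [← coboundary_signPrimitive, coboundary, Fin.sum_univ_succAbove _ i, hg,
      CharTwo.add_self_eq_zero]
    simp [signPrimitive, cup, hzero]

section Odd

variable {ν : P → P}

lemma signPrimitive_comp_of_init {s : Fin (n + 1) → P → ZMod 2} (hs : ∀ i p, s i (ν p) = s i p + 1)
    {g : VertexCube n P}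
    (hg : signCocycle (Fin.init s) (ν ∘ g) = signCocycle (Fin.init s) g) :
    signPrimitive s (ν ∘ g) = signPrimitive s g + signCocycle (Fin.init s) g := by
  simp only [signPrimitive, cup, hg, Function.comp_apply, hs]
  ring

lemma signCocycle_comp : ∀ {n : ℕ} {s : Fin n → P → ZMod 2}
    (_ : ∀ i p, s i (ν p) = s i p + 1) (g : VertexCube n P),
    signCocycle s (ν ∘ g) = signCocycle s g
  | 0, _, _, _ => rfl
  | n + 1, s, hs, g => by
    have hface (j c) : signPrimitive s (VertexCube.face (ν ∘ g) j c) =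
        signPrimitive s (g.face j c) + signCocycle (Fin.init s) (g.face j c) :=
      signPrimitive_comp_of_init hs (signCocycle_comp (fun i => hs i.castSucc) _)
    calc signCocycle s (ν ∘ g)
        = signCocycle s g + (signCocycle (Fin.init s)).coboundary g := by
          simp only [← coboundary_signPrimitive s, coboundary, ← sum_add_distrib, hface]
          exact sum_congr rfl fun j _ => by ring
      _ = signCocycle s g := by rw [coboundary_signCocycle, Pi.zero_apply, add_zero]

lemma signPrimitive_comp {s : Fin (n + 1) → P → ZMod 2} (hs : ∀ i p, s i (ν p) = s i p + 1)
    (g : VertexCube n P) :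
    signPrimitive s (ν ∘ g) = signPrimitive s g + signCocycle (Fin.init s) g :=
  signPrimitive_comp_of_init hs (signCocycle_comp (fun i => hs i.castSucc) g)

end Odd

end Cochain

end Cochains

section GridIntegral

open scoped unitInterval

variable {M n : ℕ} {P : Type*}

/-- The subdivision points `1 / 2 + i / (2 * M)` of the right half of the unit interval, for
`0 ≤ i ≤ M`. -/
def rightHalfGrid (M i : ℕ) : I := Set.projIcc 0 1 zero_le_one ((M + i) / (2 * M) : ℝ)

/-- The endpoints of the cells of the subdivision of the unit interval into `2 * M` cells. The cells
are oriented away from the centre, so that the symmetry `σ` permutes them compatibly with their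
orientations; a cell is given by its distance from the centre and by its side. -/
def gridPoint (e : Fin M × Bool) (b : Bool) : I :=
  bif e.2 then rightHalfGrid M (e.1 + b.toNat) else σ (rightHalfGrid M (e.1 + b.toNat))

lemma rightHalfGrid_self [NeZero M] : rightHalfGrid M M = 1 := by
  have : (M + M : ℝ) / (2 * M) = 1 := by
    rw [← two_mul, div_self (by simpa using NeZero.ne M)]
  exact Subtype.ext (by simp [rightHalfGrid, this])

lemma symm_rightHalfGrid_zero [NeZero M] : σ (rightHalfGrid M 0) = rightHalfGrid M 0 := by
  have : (M + (0 : ℕ) : ℝ) / (2 * M) = 1 / 2 := by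
    rw [Nat.cast_zero, add_zero, div_mul_cancel_right₀ (by simpa using NeZero.ne M), one_div]
  rw [rightHalfGrid, this, Set.projIcc_of_mem _ ⟨by norm_num, by norm_num⟩]
  exact Subtype.ext (by norm_num)

lemma gridPoint_not (e : Fin M × Bool) (b : Bool) :
    gridPoint (e.1, !e.2) b = σ (gridPoint e b) := by
  rcases e with ⟨i, _ | _⟩ <;> simp [gridPoint]

lemma dist_rightHalfGrid_succ_le (M i : ℕ) :
    dist (rightHalfGrid M (i + 1)) (rightHalfGrid M i) ≤ 1 / M := by
  have hdiff : ((M + (i + 1 : ℕ)) / (2 * M) - (M + i) / (2 * M) : ℝ) = 1 / (2 * M) := by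
    push_cast
    ring
  refine (Set.abs_projIcc_sub_projIcc zero_le_one).trans ?_
  rw [hdiff, abs_of_nonneg (by positivity), one_div, one_div, mul_inv]
  exact mul_le_of_le_one_left (by positivity) (by norm_num)

lemma dist_gridPoint_le (e : Fin M × Bool) (b b' : Bool) :
    dist (gridPoint e b) (gridPoint e b') ≤ 1 / M := by
  have hgrid := dist_rightHalfGrid_succ_le M e.1
  have hsymm : dist (σ (rightHalfGrid M (e.1 + 1))) (σ (rightHalfGrid M e.1)) ≤ 1 / M :=
    (dist_sub_left (1 : ℝ) _ _).trans_le hgrid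
  rcases e with ⟨i, _ | _⟩ <;> cases b <;> cases b' <;> simp_all [gridPoint, dist_comm]

lemma sum_gridPoint [NeZero M] (h : I → ZMod 2) :
    ∑ e : Fin M × Bool, (h (gridPoint e true) + h (gridPoint e false)) = h 1 + h 0 := by
  have telescope (k : ℕ → ZMod 2) : ∑ i : Fin M, (k (i + 1) + k i) = k M + k 0 := by
    rw [Fin.sum_univ_eq_sum_range fun i => k (i + 1) + k i]
    simpa only [CharTwo.sub_eq_add] using sum_range_sub k M
  have hright := telescope fun i => h (rightHalfGrid M i)
  have hleft := telescope fun i => h (σ (rightHalfGrid M i))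
  rw [symm_rightHalfGrid_zero, rightHalfGrid_self] at hleft
  rw [rightHalfGrid_self] at hright
  rw [Fintype.sum_prod_type_right, Fintype.sum_bool]
  simp only [gridPoint, cond_true, cond_false, Bool.toNat_true, Bool.toNat_false, add_zero]
  rw [hright, hleft, unitInterval.symm_one]
  linear_combination CharTwo.add_self_eq_zero (h (rightHalfGrid M 0))

/-- The restriction of a map on the unit cube to the vertices of a cell of the grid. -/
def gridCell (F : (Fin n → I) → P) (e : Fin n → Fin M × Bool) : VertexCube n P :=
  fun b => F fun i => gridPoint (e i) (b i)

/-- The sum of the values of a cochain on all cells of a subdivided map on the unit cube. -/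
def gridIntegral (M : ℕ) (β : Cochain n P) (F : (Fin n → I) → P) : ZMod 2 :=
  ∑ e : Fin n → Fin M × Bool, β (gridCell F e)

theorem gridIntegral_coboundary [NeZero M] (β : Cochain n P) (F : (Fin (n + 1) → I) → P) :
    gridIntegral M β.coboundary F = ∑ j : Fin (n + 1),
      (gridIntegral M β (fun y => F (j.insertNth 1 y)) +
        gridIntegral M β (fun y => F (j.insertNth 0 y))) := by
  unfold gridIntegral Cochain.coboundary
  rw [sum_comm]
  refine sum_congr rfl fun j _ => ?_
  rw [← (Fin.insertNthEquiv (fun _ => Fin M × Bool) j).sum_comp, Fintype.sum_prod_type,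
    sum_comm, ← sum_add_distrib]
  refine sum_congr rfl fun e _ => ?_
  rw [← sum_gridPoint (M := M) fun x => β (gridCell (fun y => F (j.insertNth x y)) e)]
  have hface (e₀ : Fin M × Bool) (c : Bool) :
      VertexCube.face (gridCell F (j.insertNth (α := fun _ => _) e₀ e)) j c =
        gridCell (fun y => F (j.insertNth (gridPoint e₀ c) y)) e := by
    funext b
    refine congrArg F (Fin.insertNth_eq_iff.2 ⟨by simp, ?_⟩).symm
    funext k
    simp [Fin.removeNth]
  exact sum_congr rfl fun e₀ _ => by rw [← hface, ← hface]; rfl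

lemma gridIntegral_comp_symm (β : Cochain n P) (F : (Fin n → I) → P) :
    gridIntegral M β (fun y => F (σ ∘ y)) = gridIntegral M β F := by
  have hinv : Function.Involutive fun (e : Fin n → Fin M × Bool) i => ((e i).1, !(e i).2) :=
    fun e => by simp
  refine Fintype.sum_bijective _ hinv.bijective _ _ fun e => congrArg β ?_
  funext b
  refine congrArg F (funext fun i => ?_)
  exact (gridPoint_not (e i) (b i)).symm

lemma gridIntegral_signPrimitive_eq_zero (s : Fin (n + 1) → P → ZMod 2) (F : (Fin n → I) → P)
    (i : Fin n) (hF : ∀ x y, (∀ j ≠ i, x j = y j) → F x = F y) :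
    gridIntegral M (Cochain.signPrimitive s) F = 0 := by
  refine sum_eq_zero fun e _ => ?_
  obtain ⟨m, rfl⟩ : ∃ m, n = m + 1 := ⟨n - 1, by have := i.pos; omega⟩
  rw [Cochain.signPrimitive, Cochain.cup, Cochain.signCocycle_eq_zero_of_face_eq _ _ i, zero_mul]
  funext b
  refine hF _ _ fun j hj => ?_
  obtain ⟨k, rfl⟩ := Fin.exists_succAbove_eq hj
  simp

lemma gridIntegral_signPrimitive_comp_add {s : Fin (n + 1) → P → ZMod 2} {ν : P → P}
    (hs : ∀ i p, s i (ν p) = s i p + 1) (F : (Fin n → I) → P) :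
    gridIntegral M (Cochain.signPrimitive s) (fun y => ν (F y)) +
      gridIntegral M (Cochain.signPrimitive s) F =
        gridIntegral M (Cochain.signCocycle (Fin.init s)) F := by
  unfold gridIntegral
  rw [← sum_add_distrib]
  refine sum_congr rfl fun e _ => ?_
  have hcomp := Cochain.signPrimitive_comp hs (gridCell F e)
  rw [← CharTwo.sub_eq_add, sub_eq_iff_eq_add']
  exact hcomp

end GridIntegral

section Hemispherical

open scoped unitInterval

variable {M m d : ℕ} {P Q : Type*} {ν : P → P}

/-- A map on the unit cube is hemispherical, with respect to an involution `ν` of the target, if it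
describes the upper hemisphere of an equivariant map of spheres: it fans out from the hemispherical
map on its face `x 0 = 0`, relative to the boundary of that face, to the antipode of that face. -/
def IsHemispherical (ν : P → P) : {m : ℕ} → ((Fin m → I) → P) → Prop
  | 0, _ => True
  | _ + 1, f => IsHemispherical ν (fun y => f (Fin.cons 0 y)) ∧
      (∀ y, f (Fin.cons 1 y) = ν (f (Fin.cons 0 (σ ∘ y)))) ∧
      ∀ t, ∀ y ∈ Cube.boundary _, f (Fin.cons t y) = f (Fin.cons 0 y)

lemma symm_comp_insertNth (j : Fin (m + 1)) (t : I) (y : Fin m → I) :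
    σ ∘ (j.insertNth t y : Fin (m + 1) → I) = j.insertNth (σ t) (σ ∘ y) :=
  (Fin.insertNth_eq_iff.2 ⟨by simp, funext fun _ => by simp [Fin.removeNth]⟩).symm

lemma symm_comp_cons (t : I) (y : Fin m → I) :
    σ ∘ (Fin.cons t y : Fin (m + 1) → I) = Fin.cons (σ t) (σ ∘ y) := by
  simpa only [Fin.insertNth_zero'] using symm_comp_insertNth 0 t y

lemma tail_insertNth_succ_mem_boundary (j : Fin m) {t : I} (ht : t = 0 ∨ t = 1) (y : Fin m → I) :
    Fin.tail (j.succ.insertNth t y : Fin (m + 1) → I) ∈ Cube.boundary (Fin m) :=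
  ⟨j, by simpa [Fin.tail] using ht⟩

lemma symm_comp_symm_comp (y : Fin m → I) : σ ∘ σ ∘ y = y :=
  funext fun _ => unitInterval.symm_symm _

lemma symm_comp_mem_boundary {y : Fin m → I} (hy : y ∈ Cube.boundary (Fin m)) :
    σ ∘ y ∈ Cube.boundary (Fin m) :=
  hy.imp fun i hi => by simpa [unitInterval.symm_eq_zero, unitInterval.symm_eq_one] using hi.symm

lemma cons_mem_boundary_iff {t : I} {y : Fin m → I} :
    (Fin.cons t y : Fin (m + 1) → I) ∈ Cube.boundary (Fin (m + 1)) ↔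
      (t = 0 ∨ t = 1) ∨ y ∈ Cube.boundary (Fin m) := by
  simp [Cube.boundary, Fin.exists_fin_succ]

namespace IsHemispherical

lemma comp {ρ : Q → Q} {q : Q → P} (hq : ∀ x, q (ρ x) = ν (q x)) :
    ∀ {m : ℕ} {f : (Fin m → I) → Q}, IsHemispherical ρ f → IsHemispherical ν (q ∘ f)
  | 0, _, _ => trivial
  | _ + 1, _, ⟨hface, hanti, hrel⟩ =>
    ⟨hface.comp hq, fun y => by simp only [Function.comp_apply, hanti, hq],
      fun t y hy => congrArg q (hrel t y hy)⟩

lemma apply_symm_comp (hν : Function.Involutive ν) : ∀ {m : ℕ} {f : (Fin m → I) → P},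
    IsHemispherical ν f → ∀ y ∈ Cube.boundary (Fin m), f (σ ∘ y) = ν (f y)
  | 0, _, _, _, hy => hy.elim fun i => i.elim0
  | m + 1, f, ⟨hface, hanti, hrel⟩, y, hy => by
    induction y using Fin.consCases with | _ t y
    rw [symm_comp_cons]
    rcases cons_mem_boundary_iff.1 hy with (rfl | rfl) | hy
    · rw [unitInterval.symm_zero, hanti, symm_comp_symm_comp]
    · rw [unitInterval.symm_one, hanti, hν]
    · rw [hrel _ _ (symm_comp_mem_boundary hy), hrel _ _ hy]
      exact hface.apply_symm_comp hν y hy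

lemma apply_eq_of_tail_eq {f : (Fin (m + 1) → I) → P} (hf : IsHemispherical ν f)
    {x y : Fin (m + 1) → I} (hx : Fin.tail x ∈ Cube.boundary (Fin m))
    (hxy : Fin.tail x = Fin.tail y) : f x = f y := by
  rw [← Fin.cons_self_tail x, ← Fin.cons_self_tail y, ← hxy, hf.2.2 _ _ hx, hf.2.2 (y 0) _ hx]

theorem gridIntegral_signCocycle [NeZero M] : ∀ {m : ℕ} {f : (Fin m → I) → P}
    (_ : IsHemispherical ν f) {s : Fin m → P → ZMod 2} (_ : ∀ i p, s i (ν p) = s i p + 1),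
    gridIntegral M (Cochain.signCocycle s) f = 1
  | 0, _, _, _, _ => by simp [gridIntegral, Cochain.signCocycle]
  | m + 1, f, hf, s, hs => by
    have hsides (j : Fin m) (a : I) (ha : a = 0 ∨ a = 1) :
        gridIntegral M (Cochain.signPrimitive s) (fun y => f (j.succ.insertNth a y)) = 0 := by
      obtain ⟨m, rfl⟩ : ∃ k, m = k + 1 := ⟨m - 1, by have := j.pos; omega⟩
      refine gridIntegral_signPrimitive_eq_zero s _ 0 fun x y hxy =>
        hf.apply_eq_of_tail_eq (tail_insertNth_succ_mem_boundary j ha x) ?_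
      funext i
      rcases eq_or_ne i j with rfl | hij
      · simp [Fin.tail]
      · obtain ⟨k, rfl⟩ := Fin.exists_succAbove_eq hij
        simp [Fin.tail, ← Fin.succ_succAbove_succ, hxy]
    rw [← Cochain.coboundary_signPrimitive, gridIntegral_coboundary, Fin.sum_univ_succ]
    simp only [Fin.insertNth_zero', hf.2.1]
    rw [sum_eq_zero fun j _ => by rw [hsides j 1 (.inr rfl), hsides j 0 (.inl rfl), add_zero],
      gridIntegral_comp_symm _ fun y => ν (f (Fin.cons 0 y)), add_zero,
      gridIntegral_signPrimitive_comp_add hs,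
      hf.1.gridIntegral_signCocycle (s := Fin.init s) fun i => hs i.castSucc]

end IsHemispherical

theorem exists_gridCell_forall_ne [NeZero M] {s : Fin (d + 1) → P → ZMod 2}
    (hs : ∀ i p, s i (ν p) = s i p + 1) {U : (Fin (d + 1) → I) → P}
    (hU₀ : IsHemispherical ν fun y => U (Fin.cons 0 y))
    (hU₁ : ∀ y, U (Fin.cons 1 y) = ν (U (Fin.cons 0 y)))
    (hU : ∀ x : Fin (d + 1) → I, Fin.tail x ∈ Cube.boundary (Fin d) → U (σ ∘ x) = U x) :
    ∃ e : Fin (d + 1) → Fin M × Bool, ∀ i, ∃ b b',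
      s i (gridCell U e b) ≠ s i (gridCell U e b') := by
  suffices hint : gridIntegral M (Cochain.signCocycle s) U = 1 by
    obtain ⟨e, -, he⟩ := exists_ne_zero_of_sum_ne_zero (hint.trans_ne one_ne_zero)
    exact ⟨e, Cochain.exists_ne_of_signCocycle_ne_zero s _ he⟩
  have hsides (β : Cochain d P) (j : Fin d) :
      gridIntegral M β (fun y => U (j.succ.insertNth 1 y)) =
        gridIntegral M β (fun y => U (j.succ.insertNth 0 y)) := by
    rw [← gridIntegral_comp_symm]
    refine congrArg (gridIntegral M β) (funext fun y => ?_)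
    rw [← hU _ (tail_insertNth_succ_mem_boundary j (.inl rfl) y), symm_comp_insertNth,
      unitInterval.symm_zero]
  rw [← Cochain.coboundary_signPrimitive, gridIntegral_coboundary, Fin.sum_univ_succ]
  simp only [Fin.insertNth_zero', hU₁, hsides, CharTwo.add_self_eq_zero, sum_const_zero, add_zero]
  rw [gridIntegral_signPrimitive_comp_add hs,
    hU₀.gridIntegral_signCocycle (s := Fin.init s) fun i => hs i.castSucc]

end Hemispherical

section Homotopy

open scoped unitInterval

variable {N X : Type*} [Fintype N] [TopologicalSpace X]

/-- The affine parametrisation of the cube `[-1, 1]^N` by the unit cube. -/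
def cubeCoord : C(N → I, N → ℝ) where
  toFun y i := 2 * y i - 1

/-- The coordinatewise retraction of `N → ℝ` onto the cube `[-1, 1]^N`, in terms of the
parametrisation `cubeCoord`. -/
def cubeRetract : C(N → ℝ, N → I) where
  toFun z i := Set.projIcc 0 1 zero_le_one ((z i + 1) / 2)
  continuous_toFun := continuous_pi fun i => continuous_projIcc.comp (by fun_prop)

omit [Fintype N] in
lemma cubeRetract_cubeCoord (y : N → I) : cubeRetract (cubeCoord y) = y := by
  funext i
  simp [cubeRetract, cubeCoord]

lemma cubeCoord_cubeRetract {z : N → ℝ} (hz : ‖z‖ ≤ 1) : cubeCoord (cubeRetract z) = z := by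
  funext i
  have hi := abs_le.1 ((norm_le_pi_norm z i).trans hz)
  have hmem : (z i + 1) / 2 ∈ Set.Icc (0 : ℝ) 1 := ⟨by linarith, by linarith⟩
  simp only [cubeCoord, cubeRetract, ContinuousMap.coe_mk, Set.projIcc_of_mem _ hmem]
  ring

lemma norm_cubeCoord_le_one (y : N → I) : ‖cubeCoord y‖ ≤ 1 := by
  refine (pi_norm_le_iff_of_nonneg zero_le_one).2 fun i => abs_le.2 ?_
  simp only [cubeCoord, ContinuousMap.coe_mk]
  constructor <;> linarith [(y i).2.1, (y i).2.2]

lemma norm_cubeCoord_of_mem_boundary {y : N → I} (hy : y ∈ Cube.boundary N) :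
    ‖cubeCoord y‖ = 1 := by
  obtain ⟨i, hi⟩ := hy
  refine le_antisymm (norm_cubeCoord_le_one y) (le_trans ?_ (norm_le_pi_norm _ i))
  rcases hi with hi | hi <;> norm_num [cubeCoord, hi]

lemma cubeRetract_mem_boundary {z : N → ℝ} (hz : 1 ≤ ‖z‖) : cubeRetract z ∈ Cube.boundary N := by
  obtain ⟨i, hi⟩ : ∃ i, 1 ≤ |z i| := by
    by_contra! h
    exact hz.not_gt ((pi_norm_lt_iff one_pos).2 h)
  refine ⟨i, (le_abs'.1 hi).imp (fun h => ?_) fun h => ?_⟩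
  · exact Set.projIcc_of_le_left zero_le_one (by linarith)
  · exact Set.projIcc_of_right_le zero_le_one (by linarith)

section Fold

variable {E : Type*} [NormedAddCommGroup E] [NormedSpace ℝ E]

/-- A map of a normed space that fixes the unit ball, reflects the shell `1 ≤ ‖z‖ ≤ 2` radially into
the unit ball, and collapses the rest to the origin. -/
def radialFold (z : E) : E := max 0 (2 / max 1 ‖z‖ - 1) • z

lemma continuous_radialFold : Continuous (radialFold : E → E) := by
  have (z : E) : max 1 ‖z‖ ≠ 0 := (one_pos.trans_le (le_max_left _ _)).ne'
  unfold radialFold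
  fun_prop (disch := assumption)

lemma radialFold_of_norm_le_one {z : E} (hz : ‖z‖ ≤ 1) : radialFold z = z := by
  norm_num [radialFold, hz]

lemma radialFold_of_two_le_norm {z : E} (hz : 2 ≤ ‖z‖) : radialFold z = 0 := by
  have : 2 / ‖z‖ - 1 ≤ 0 := sub_nonpos.2 ((div_le_one (by linarith)).2 hz)
  rw [radialFold, max_eq_right (by linarith : 1 ≤ ‖z‖), max_eq_left this, zero_smul]

end Fold

/-- The union of two maps `f` and `g` on the cube `[-1, 1]^N` that agree on its boundary: `f` in the
unit ball, followed by the mirror image of `g` in the shell `1 ≤ ‖z‖ ≤ 2`, and constant beyond. -/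
def glueMirror (f g : C(N → I, X)) (hfg : ∀ y ∈ Cube.boundary N, f y = g y) : C(N → ℝ, X) where
  toFun z := if ‖z‖ ≤ 1 then f (cubeRetract z) else g (cubeRetract (radialFold z))
  continuous_toFun := by
    have hfold := continuous_radialFold (E := N → ℝ)
    refine Continuous.if_le (by fun_prop) (by fun_prop) (by fun_prop) (by fun_prop) fun z hz => ?_
    rw [radialFold_of_norm_le_one hz.le, hfg _ (cubeRetract_mem_boundary hz.ge)]

section GlueMirror

variable {f g : C(N → I, X)} (hfg : ∀ y ∈ Cube.boundary N, f y = g y)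

lemma glueMirror_of_one_le_norm {z : N → ℝ} (hz : 1 ≤ ‖z‖) :
    glueMirror f g hfg z = g (cubeRetract (radialFold z)) := by
  by_cases h : ‖z‖ ≤ 1
  · rw [radialFold_of_norm_le_one h, ← hfg _ (cubeRetract_mem_boundary hz)]
    exact if_pos h
  · exact if_neg h

lemma glueMirror_of_two_le_norm {z : N → ℝ} (hz : 2 ≤ ‖z‖) :
    glueMirror f g hfg z = g (cubeRetract 0) := by
  rw [glueMirror_of_one_le_norm hfg (one_le_two.trans hz), radialFold_of_two_le_norm hz]

lemma glueMirror_comp_cubeCoord : (glueMirror f g hfg).comp cubeCoord = f := by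
  ext y
  simp [glueMirror, norm_cubeCoord_le_one, cubeRetract_cubeCoord]

lemma glueMirror_two_smul_cubeCoord_cubeRetract (z : N → ℝ) :
    glueMirror f g hfg ((2 : ℝ) • cubeCoord (cubeRetract ((1 / 2 : ℝ) • z))) =
      glueMirror f g hfg z := by
  have hnorm : ‖(1 / 2 : ℝ) • z‖ = ‖z‖ / 2 := by
    rw [norm_smul, Real.norm_of_nonneg one_half_pos.le, one_div_mul_eq_div]
  rcases le_total ‖z‖ 2 with hz | hz
  · rw [cubeCoord_cubeRetract (by rw [hnorm]; linarith), smul_smul]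
    norm_num
  · rw [glueMirror_of_two_le_norm hfg hz, glueMirror_of_two_le_norm hfg]
    have hmem : cubeRetract ((1 / 2 : ℝ) • z) ∈ Cube.boundary N :=
      cubeRetract_mem_boundary (by rw [hnorm]; linarith)
    rw [norm_smul, norm_cubeCoord_of_mem_boundary hmem]
    norm_num

variable (f g) in
/-- The map `glueMirror f g` on the ball `‖z‖ ≤ 2`, rescaled to a loop on the unit cube. -/
def glueMirrorLoop : GenLoop N X (g (cubeRetract 0)) :=
  ⟨(glueMirror f g hfg).comp ((2 : ℝ) • cubeCoord), fun y hy => glueMirror_of_two_le_norm hfg (by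
    simp [norm_smul, norm_cubeCoord_of_mem_boundary hy])⟩

lemma exists_homotopy_glueMirror (hX : ∀ x : X, Subsingleton (HomotopyGroup N X x)) :
    ∃ G : (glueMirror f g hfg).Homotopy (glueMirror g g fun _ _ => rfl),
      ∀ t z, 2 ≤ ‖z‖ → G (t, z) = g (cubeRetract 0) := by
  obtain ⟨G⟩ : GenLoop.Homotopic (glueMirrorLoop f g hfg) (glueMirrorLoop g g fun _ _ => rfl) :=
    Quotient.exact ((hX _).elim ⟦_⟧ ⟦_⟧)
  let shrink : C(N → ℝ, N → I) := cubeRetract.comp ((1 / 2 : ℝ) • .id _)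
  refine ⟨⟨G.toContinuousMap.comp (.prodMap (.id I) shrink), fun z => ?_, fun z => ?_⟩,
    fun t z hz => ?_⟩
  · exact (G.apply_zero _).trans (glueMirror_two_smul_cubeCoord_cubeRetract hfg z)
  · exact (G.apply_one _).trans (glueMirror_two_smul_cubeCoord_cubeRetract _ z)
  · have hmem : shrink z ∈ Cube.boundary N := cubeRetract_mem_boundary (by
      rw [ContinuousMap.smul_apply, norm_smul, Real.norm_of_nonneg one_half_pos.le,
        ContinuousMap.id_apply]
      linarith)
    exact (G.eq_fst t hmem).trans ((glueMirrorLoop f g hfg).2 _ hmem)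

end GlueMirror

/-- A map of the cube `[-1, 1]^N` to `N → ℝ` which fixes the boundary of the cube and maps its
neighbourhood to the exterior of the cube, reaching `‖z‖ ≥ 2` before it returns. -/
def overshoot : C(N → I, N → ℝ) where
  toFun y := (1 + 8 * (1 - ‖cubeCoord y‖)) • cubeCoord y

lemma norm_overshoot (y : N → I) :
    ‖overshoot y‖ = (9 - 8 * ‖cubeCoord y‖) * ‖cubeCoord y‖ := by
  have := norm_cubeCoord_le_one y
  rw [overshoot, ContinuousMap.coe_mk, norm_smul, Real.norm_of_nonneg (by linarith)]
  ring

lemma overshoot_of_mem_boundary {y : N → I} (hy : y ∈ Cube.boundary N) :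
    overshoot y = cubeCoord y := by
  simp [overshoot, norm_cubeCoord_of_mem_boundary hy]

lemma homotopicRel_cubeCoord_overshoot :
    cubeCoord.HomotopicRel overshoot (Cube.boundary N) :=
  ⟨.affine _ _, fun t y hy => by
    simp [overshoot_of_mem_boundary hy]⟩

lemma homotopicRel_glueMirror_comp_overshoot {f g : C(N → I, X)}
    (hfg : ∀ y ∈ Cube.boundary N, f y = g y) :
    f.HomotopicRel ((glueMirror f g hfg).comp overshoot) (Cube.boundary N) := by
  simpa only [glueMirror_comp_cubeCoord] using
    homotopicRel_cubeCoord_overshoot.comp_continuousMap (glueMirror f g hfg)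

lemma glueMirror_comp_overshoot_homotopicRel (hX : ∀ x : X, Subsingleton (HomotopyGroup N X x))
    {f g : C(N → I, X)} (hfg : ∀ y ∈ Cube.boundary N, f y = g y) :
    ((glueMirror f g hfg).comp overshoot).HomotopicRel
      ((glueMirror g g fun _ _ => rfl).comp overshoot) (Cube.boundary N) := by
  obtain ⟨G, hG⟩ := exists_homotopy_glueMirror hfg hX
  let time : C(I × (N → I), I) :=
    ⟨fun q => q.1 * Set.projIcc 0 1 zero_le_one (3 - 4 * ‖cubeCoord q.2‖), by
      have := continuous_projIcc (h := zero_le_one (α := ℝ))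
      fun_prop⟩
  have htime (t : I) {y : N → I} (hy : 3 / 4 ≤ ‖cubeCoord y‖) : time (t, y) = 0 := by
    simp [time, Set.projIcc_of_le_left zero_le_one (show 3 - 4 * ‖cubeCoord y‖ ≤ 0 by linarith)]
  refine ⟨⟨⟨G.toContinuousMap.comp (time.prodMk (overshoot.comp .snd)), fun y => ?_, fun y => ?_⟩,
    fun t y hy => ?_⟩⟩
  · simp [time]
  · have hnorm := norm_overshoot y
    have hle := norm_cubeCoord_le_one y
    rcases le_total ‖cubeCoord y‖ (1 / 2) with h | h
    · simp [time, Set.projIcc_of_right_le zero_le_one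
        (show 1 ≤ 3 - 4 * ‖cubeCoord y‖ by linarith)]
    rcases le_total ‖cubeCoord y‖ (3 / 4) with h' | h'
    · have htwo : 2 ≤ ‖overshoot y‖ := by nlinarith
      exact (hG _ _ htwo).trans (glueMirror_of_two_le_norm (fun _ _ => rfl) htwo).symm
    · have hone : 1 ≤ ‖overshoot y‖ := by nlinarith
      simp [htime 1 h', glueMirror_of_one_le_norm _ hone]
  · simp [htime t (y := y) (by rw [norm_cubeCoord_of_mem_boundary hy]; norm_num)]

omit [Fintype N] in
theorem homotopicRel_boundary_of_subsingleton_homotopyGroup [Finite N]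
    (hX : ∀ x : X, Subsingleton (HomotopyGroup N X x)) {f g : C(N → I, X)}
    (hfg : ∀ y ∈ Cube.boundary N, f y = g y) : f.HomotopicRel g (Cube.boundary N) := by
  have := Fintype.ofFinite N
  exact ((homotopicRel_glueMirror_comp_overshoot hfg).trans
    (glueMirror_comp_overshoot_homotopicRel hX hfg)).trans
    (homotopicRel_glueMirror_comp_overshoot fun _ _ => rfl).symm

end Homotopy

section Antipodal

open scoped unitInterval

variable {d : ℕ} {X P : Type*} [TopologicalSpace X]

lemma exists_isHemispherical [Nonempty X] {ρ : C(X, X)} (hρ : Function.Involutive ρ) :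
    ∀ {d : ℕ}, (∀ i < d, ∀ x : X, Subsingleton (HomotopyGroup (Fin i) X x)) →
      ∃ φ : C(Fin d → I, X), IsHemispherical ρ φ
  | 0, _ => ⟨.const _ (Classical.arbitrary X), trivial⟩
  | d + 1, hX => by
    obtain ⟨φ, hφ⟩ := exists_isHemispherical hρ fun i hi => hX i (hi.trans d.lt_succ_self)
    let symmCube : C(Fin d → I, Fin d → I) := ⟨fun y => σ ∘ y, by fun_prop⟩
    obtain ⟨F⟩ : φ.HomotopicRel (ρ.comp (φ.comp symmCube)) (Cube.boundary (Fin d)) :=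
      homotopicRel_boundary_of_subsingleton_homotopyGroup (hX d d.lt_succ_self) fun y hy => by
        simp [symmCube, hφ.apply_symm_comp hρ y hy, hρ (φ y)]
    refine ⟨⟨fun x => F (x 0, Fin.tail x), by unfold Fin.tail; fun_prop⟩, ?_, fun y => ?_,
      fun t y hy => ?_⟩
    · simpa using hφ
    · simp [symmCube]
    · simpa using F.eq_fst t hy

lemma exists_forall_dist_gridCell_lt [PseudoMetricSpace P] {U : (Fin d → I) → P}
    (hU : Continuous U) {ε : ℝ} (hε : 0 < ε) :
    ∃ M : ℕ, NeZero M ∧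
      ∀ (e : Fin d → Fin M × Bool) b b', dist (gridCell U e b) (gridCell U e b') < ε := by
  obtain ⟨δ, hδ, hUδ⟩ := Metric.uniformContinuous_iff.1
    (CompactSpace.uniformContinuous_of_continuous hU) ε hε
  obtain ⟨M, hM⟩ := exists_nat_one_div_lt hδ
  refine ⟨M + 1, inferInstance, fun e b b' => hUδ ?_⟩
  refine ((dist_pi_le_iff (by positivity)).2 fun i => dist_gridPoint_le _ _ _).trans_lt ?_
  exact_mod_cast hM

/-- The sign of the `i`-th coordinate of a point of the unit sphere, as an element of `ZMod 2`. The
lexicographic order breaks the tie at zero, so that antipodal points always have opposite signs. -/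
def coordSign (i : Fin (d + 1)) (p : Metric.sphere (0 : Fin (d + 1) → ℝ) 1) : ZMod 2 :=
  if 0 < toLex (p.1 i, toLex p.1) then 1 else 0

lemma coordSign_neg (i : Fin (d + 1)) (p : Metric.sphere (0 : Fin (d + 1) → ℝ) 1) :
    coordSign i (-p) = coordSign i p + 1 := by
  have hp : toLex (p.1 i, toLex p.1) ≠ 0 := fun h =>
    ne_zero_of_mem_unit_sphere p
      (congrArg (fun q : ℝ ×ₗ Lex (Fin (d + 1) → ℝ) => ofLex (ofLex q).2) h)
  have hneg : toLex ((-p).1 i, toLex (-p).1) = -toLex (p.1 i, toLex p.1) := rfl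
  rw [coordSign, coordSign, hneg]
  rcases hp.lt_or_gt with h | h
  · rw [if_pos (neg_pos.2 h), if_neg h.not_gt, zero_add]
  · rw [if_neg (neg_neg_of_pos h).not_gt, if_pos h, CharTwo.add_self_eq_zero]

lemma coordSign_eq_one {i : Fin (d + 1)} {p : Metric.sphere (0 : Fin (d + 1) → ℝ) 1}
    (hp : 0 < p.1 i) : coordSign i p = 1 :=
  if_pos (Prod.Lex.toLex_lt_toLex.2 (.inl hp))

lemma coordSign_eq_zero {i : Fin (d + 1)} {p : Metric.sphere (0 : Fin (d + 1) → ℝ) 1}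
    (hp : p.1 i < 0) : coordSign i p = 0 :=
  if_neg (Prod.Lex.toLex_lt_toLex.2 (.inl hp)).not_gt

lemma abs_le_of_coordSign_ne {i : Fin (d + 1)} {p q : Metric.sphere (0 : Fin (d + 1) → ℝ) 1}
    (h : coordSign i p ≠ coordSign i q) : |p.1 i| ≤ |p.1 i - q.1 i| := by
  rcases lt_trichotomy (p.1 i) 0 with hp | hp | hp
  · have hq : 0 ≤ q.1 i := not_lt.1 fun hq =>
      h ((coordSign_eq_zero hp).trans (coordSign_eq_zero hq).symm)
    rw [abs_of_neg hp, abs_of_nonpos (by linarith)]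
    linarith
  · simp [hp]
  · have hq : q.1 i ≤ 0 := not_lt.1 fun hq =>
      h ((coordSign_eq_one hp).trans (coordSign_eq_one hq).symm)
    rw [abs_of_pos hp, abs_of_nonneg (by linarith)]
    linarith

theorem not_exists_antipodal_homotopy [Nonempty X] {ρ : C(X, X)} (hρ : Function.Involutive ρ)
    (hX : ∀ i < d, ∀ x : X, Subsingleton (HomotopyGroup (Fin i) X x))
    (H : C(X × I, Metric.sphere (0 : Fin (d + 1) → ℝ) 1))
    (hHρ : ∀ x t, H (ρ x, σ t) = H (x, t)) : ¬ ∀ x, H (x, 1) = -H (x, 0) := by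
  intro hHend
  obtain ⟨φ, hφ⟩ := exists_isHemispherical hρ hX
  let U (x : Fin (d + 1) → I) := H (φ (Fin.tail x), x 0)
  have hU : Continuous U := by
    unfold U Fin.tail
    fun_prop
  obtain ⟨M, _, hM⟩ := exists_forall_dist_gridCell_lt hU one_pos
  have hface : IsHemispherical Neg.neg fun y => U (Fin.cons 0 y) :=
    hφ.comp (q := fun x => H (x, 0)) fun x => by
      rw [← hHend, ← hHρ x 1, unitInterval.symm_one]
  obtain ⟨e, he⟩ := exists_gridCell_forall_ne (M := M) (s := coordSign) coordSign_neg hface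
    (fun y => hHend (φ y)) fun x hx => by
      change H (φ (σ ∘ Fin.tail x), σ (x 0)) = H (φ (Fin.tail x), x 0)
      rw [hφ.apply_symm_comp hρ _ hx, hHρ]
  let p := gridCell U e ⊤
  have hp (i : Fin (d + 1)) : ‖p.1 i‖ < 1 := by
    obtain ⟨b, hb⟩ : ∃ b, coordSign i p ≠ coordSign i (gridCell U e b) := by
      by_contra! h
      obtain ⟨b, b', hbb'⟩ := he i
      exact hbb' ((h b).symm.trans (h b'))
    calc ‖p.1 i‖ ≤ dist (p.1 i) ((gridCell U e b).1 i) := abs_le_of_coordSign_ne hb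
      _ ≤ dist p (gridCell U e b) := dist_le_pi_dist p.1 _ i
      _ < 1 := hM e ⊤ b
  exact ((pi_norm_lt_iff one_pos).2 hp).ne (norm_eq_of_mem_sphere p)

end Antipodal

section PiecewiseLinear

variable {E : Type*} [AddCommGroup E] [Module ℝ E] {n : ℕ} {u : ℝ}

/-- The piecewise linear path through the points `a 0, …, a n`, which is at `a k` at time `k`: the
weight of `a k` is the hat function centred at `k`. -/
def piecewiseLinear (n : ℕ) (a : ℕ → E) (u : ℝ) : E :=
  ∑ k ∈ range (n + 1), max 0 (1 - |u - k|) • a k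

lemma piecewiseLinear_of_mem_Icc {k : ℕ} (hk : k < n) (hu : u ∈ Set.Icc (k : ℝ) (k + 1))
    (a : ℕ → E) : piecewiseLinear n a u = (k + 1 - u) • a k + (u - k) • a (k + 1) := by
  have hfar : ∀ j ∈ range (n + 1), j ∉ ({k, k + 1} : Finset ℕ) →
      max 0 (1 - |u - j|) • a j = 0 := by
    intro j _ hj
    simp only [mem_insert, mem_singleton, not_or] at hj
    have hdist : 1 ≤ |u - j| := by
      rcases lt_or_gt_of_ne hj.1 with h | h
      · have : (j : ℝ) + 1 ≤ k := mod_cast h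
        exact le_abs.2 (.inl (by linarith [hu.1]))
      · have : (k : ℝ) + 1 + 1 ≤ j := mod_cast (show k + 1 + 1 ≤ j by omega)
        exact le_abs.2 (.inr (by linarith [hu.2]))
    rw [max_eq_left (sub_nonpos.2 hdist), zero_smul]
  have hnear : ({k, k + 1} : Finset ℕ) ⊆ range (n + 1) := by
    simp only [insert_subset_iff, singleton_subset_iff, mem_range]
    omega
  have hleft : max 0 (1 - |u - k|) = k + 1 - u := by
    rw [abs_of_nonneg (sub_nonneg.2 hu.1), max_eq_right] <;> linarith [hu.2]
  have hright : max 0 (1 - |u - (k + 1 : ℕ)|) = u - k := by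
    push_cast
    rw [abs_of_nonpos (sub_nonpos.2 hu.2), max_eq_right] <;> linarith [hu.1]
  rw [piecewiseLinear, ← sum_subset hnear hfar, sum_pair k.lt_succ_self.ne, hleft, hright]

lemma exists_mem_Icc_natCast (hn : 0 < n) (hu : u ∈ Set.Icc (0 : ℝ) n) :
    ∃ k < n, u ∈ Set.Icc (k : ℝ) (k + 1) := by
  rcases hu.2.eq_or_lt with rfl | hlt
  · exact ⟨n - 1, Nat.sub_one_lt_of_lt hn, by simp [Nat.cast_pred hn]⟩
  · exact ⟨⌊u⌋₊, (Nat.floor_lt hu.1).2 hlt, Nat.floor_le hu.1, (Nat.lt_floor_add_one u).le⟩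

lemma piecewiseLinear_reverse (n : ℕ) (a : ℕ → E) (u : ℝ) :
    piecewiseLinear n (fun k => a (n - k)) (n - u) = piecewiseLinear n a u := by
  rw [piecewiseLinear, piecewiseLinear, ← sum_range_reflect]
  refine sum_congr rfl fun k hk => ?_
  have hk' : k ≤ n := Nat.lt_succ_iff.1 (mem_range.1 hk)
  rw [show n + 1 - 1 - k = n - k by omega, Nat.sub_sub_self hk', Nat.cast_sub hk',
    sub_sub_sub_cancel_left, abs_sub_comm]

lemma piecewiseLinear_congr {a b : ℕ → E} (h : ∀ k ≤ n, a k = b k) :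
    piecewiseLinear n a = piecewiseLinear n b :=
  funext fun _ => sum_congr rfl fun k hk => by rw [h k (Nat.lt_succ_iff.1 (mem_range.1 hk))]

end PiecewiseLinear

section OddCycle

open scoped unitInterval

variable {r : ℕ} {G T : Graph}

/-- The difference of the distributions at the `k`-th and the next vertex of the odd cycle, with
alternating sign. Vertices are counted from `r`, so that `cycleReflect r` swaps the ends of the
edge `k = 0`; since the cycle is odd, going around it once changes the sign. -/
def alternatingDiff (f : HomComplex (oddCycle r) G) (k : ℕ) : G.V → ℝ :=
  (-1 : ℝ) ^ k • (f.1 (k + r) - f.1 (k + r + 1))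

lemma alternatingDiff_full_turn (f : HomComplex (oddCycle r) G) :
    alternatingDiff f (2 * r + 1) = -alternatingDiff f 0 := by
  simp [alternatingDiff, pow_succ, pow_mul]

lemma alternatingDiff_reflect (f : HomComplex (oddCycle r) G) {k : ℕ} (hk : k ≤ 2 * r + 1) :
    alternatingDiff (precompHom (cycleReflect r) G f) k = alternatingDiff f (2 * r + 1 - k) := by
  have hturn : ((2 * r + 1 : ℕ) : ZMod (2 * r + 1)) = 0 := ZMod.natCast_self _
  have hsign : (-1 : ℝ) ^ (2 * r + 1 - k) = -(-1) ^ k := by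
    have h := pow_sub_mul_pow (-1 : ℝ) hk
    rw [Odd.neg_one_pow ⟨r, rfl⟩] at h
    rcases neg_one_pow_eq_or ℝ k with hk | hk <;> simp only [hk] at h ⊢ <;> linarith
  have hvertex : ((2 * r + 1 - k : ℕ) : ZMod (2 * r + 1)) + r = -(k + r + 1) := by
    rw [Nat.cast_sub hk]
    push_cast at hturn ⊢
    linear_combination 2 * hturn
  change (-1 : ℝ) ^ k • (f.1 (-(k + r)) - f.1 (-(k + r + 1))) = _
  rw [alternatingDiff, hsign, hvertex, neg_smul, ← smul_neg, neg_sub]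
  ring_nf

lemma sum_alternatingDiff (f : HomComplex (oddCycle r) G) (k : ℕ) :
    ∑ v, alternatingDiff f k v = 0 := by
  simp [alternatingDiff, ← mul_sum, f.2.2.1]

/-- The path through the vectors `alternatingDiff f k` for one full turn around the odd cycle. -/
def alternatingPath (f : HomComplex (oddCycle r) G) (t : I) : G.V → ℝ :=
  piecewiseLinear (2 * r + 1) (alternatingDiff f) ((2 * r + 1 : ℕ) * t)

lemma continuous_alternatingPath :
    Continuous fun z : HomComplex (oddCycle r) G × I => alternatingPath z.1 z.2 := by
  have hf (x : ZMod (2 * r + 1)) :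
      Continuous fun z : HomComplex (oddCycle r) G × I => z.1.1 x :=
    (continuous_apply x).comp (continuous_subtype_val.comp continuous_fst)
  unfold alternatingPath piecewiseLinear alternatingDiff
  fun_prop

lemma alternatingPath_reflect (f : HomComplex (oddCycle r) G) (t : I) :
    alternatingPath (precompHom (cycleReflect r) G f) (σ t) = alternatingPath f t := by
  rw [alternatingPath, piecewiseLinear_congr fun k => alternatingDiff_reflect f,
    unitInterval.coe_symm_eq, mul_one_sub, piecewiseLinear_reverse, alternatingPath]

lemma alternatingPath_zero (f : HomComplex (oddCycle r) G) :
    alternatingPath f 0 = alternatingDiff f 0 := by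
  rw [alternatingPath, piecewiseLinear_of_mem_Icc (k := 0) (by omega) (by simp)]
  simp

lemma alternatingPath_one (f : HomComplex (oddCycle r) G) :
    alternatingPath f 1 = -alternatingPath f 0 := by
  rw [alternatingPath_zero, ← alternatingDiff_full_turn, alternatingPath,
    piecewiseLinear_of_mem_Icc (k := 2 * r) (by omega) (by simp)]
  simp

lemma sum_alternatingPath (f : HomComplex (oddCycle r) G) (t : I) :
    ∑ v, alternatingPath f t v = 0 := by
  simp only [alternatingPath, piecewiseLinear, Finset.sum_apply, Pi.smul_apply]
  rw [sum_comm]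
  simp only [← smul_sum, sum_alternatingDiff, smul_zero, sum_const_zero]

lemma HomComplex.exists_ne_zero (f : HomComplex T G) (x : T.V) : ∃ v, f.1 x v ≠ 0 := by
  by_contra! h
  simpa [h] using f.2.2.1 x

lemma HomComplex.eq_zero_of_adj (hG : G.Loopless) (f : HomComplex T G) {x y : T.V}
    (hxy : T.adj x y) {v : G.V} (hv : f.1 y v ≠ 0) : f.1 x v = 0 :=
  by_contra fun h => hG v (f.2.2.2 x y hxy v v h hv)

lemma alternatingPath_ne_zero (hG : G.Loopless) (f : HomComplex (oddCycle r) G) (t : I) :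
    alternatingPath f t ≠ 0 := by
  obtain ⟨k, hk, hu⟩ := exists_mem_Icc_natCast (n := 2 * r + 1) (u := (2 * r + 1 : ℕ) * t)
    (by omega)
    ⟨mul_nonneg (Nat.cast_nonneg _) t.2.1, mul_le_of_le_one_right (Nat.cast_nonneg _) t.2.2⟩
  obtain ⟨v, hv⟩ := f.exists_ne_zero (k + r + 1)
  have hprev : f.1 (k + r) v = 0 := f.eq_zero_of_adj hG (.inr rfl) hv
  have hnext : f.1 (k + r + 1 + 1) v = 0 := f.eq_zero_of_adj hG (.inl rfl) hv
  intro h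
  have hv' : alternatingPath f t v = -(-1) ^ k * f.1 (k + r + 1) v := by
    rw [alternatingPath, piecewiseLinear_of_mem_Icc hk hu]
    simp only [alternatingDiff, Pi.add_apply, Pi.smul_apply, Pi.sub_apply, smul_eq_mul,
      Nat.cast_add_one, add_right_comm (k : ZMod (2 * r + 1)) 1, hprev, hnext]
    ring
  simp [h, hv] at hv'

theorem exists_antipodal_homotopy (r d : ℕ) :
    ∃ H : C(HomComplex (oddCycle r) (completeGraph (d + 2)) × I,
        Metric.sphere (0 : Fin (d + 1) → ℝ) 1),
      (∀ f t, H (precompHom (cycleReflect r) _ f, σ t) = H (f, t)) ∧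
        ∀ f, H (f, 1) = -H (f, 0) := by
  let v (z : HomComplex (oddCycle r) (completeGraph (d + 2)) × I) (i : Fin (d + 1)) : ℝ :=
    alternatingPath z.1 z.2 i.castSucc
  have hv_cont : Continuous v := continuous_pi fun i =>
    (continuous_apply i.castSucc).comp continuous_alternatingPath
  have hv_ne (z) : v z ≠ 0 := fun h => by
    have hinit (i : Fin (d + 1)) : alternatingPath z.1 z.2 i.castSucc = 0 := congrFun h i
    have hlast := sum_alternatingPath z.1 z.2
    rw [Fin.sum_univ_castSucc, sum_eq_zero fun i _ => hinit i, zero_add] at hlast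
    exact alternatingPath_ne_zero (fun _ => not_not_intro rfl) z.1 z.2
      (funext (Fin.lastCases hlast hinit))
  have hnorm (z) : ‖‖v z‖⁻¹ • v z‖ = 1 := norm_smul_inv_norm (𝕜 := ℝ) (hv_ne z)
  refine ⟨⟨fun z => ⟨‖v z‖⁻¹ • v z, mem_sphere_zero_iff_norm.2 (hnorm z)⟩, ?_⟩,
    fun f t => ?_, fun f => ?_⟩
  · exact ((hv_cont.norm.inv₀ fun z => norm_ne_zero_iff.2 (hv_ne z)).smul hv_cont).subtype_mk _
  · have : v (precompHom (cycleReflect r) _ f, σ t) = v (f, t) := by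
      simp only [v, alternatingPath_reflect]
    simp [this]
  · have : v (f, 1) = -v (f, 0) := by
      ext
      simp [v, alternatingPath_one]
    ext
    simp [this]

end OddCycle

section Postcomposition

variable {G H : Graph}

open Classical in
/-- The map `Hom(T, G) → Hom(T, H)` induced by a graph homomorphism `φ : G → H`: distributions on
the vertices of `G` are pushed forward along `φ`. -/
def postcompHom (T : Graph) (φ : GraphHom G H) : C(HomComplex T G, HomComplex T H) where
  toFun f := by
    refine ⟨fun v b => ∑ a with φ.1 a = b, f.1 v a,
      fun v b => sum_nonneg fun a _ => f.2.1 v a,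
      fun v => (sum_fiberwise _ _ _).trans (f.2.2.1 v), fun x y hxy b b' hb hb' => ?_⟩
    obtain ⟨a, ha, hfa⟩ := exists_ne_zero_of_sum_ne_zero hb
    obtain ⟨a', ha', hfa'⟩ := exists_ne_zero_of_sum_ne_zero hb'
    rw [← (mem_filter.1 ha).2, ← (mem_filter.1 ha').2]
    exact φ.2 a a' (f.2.2.2 x y hxy a a' hfa hfa')
  continuous_toFun := by
    refine .subtype_mk (continuous_pi fun v => continuous_pi fun b => ?_) _
    exact continuous_finsetSum _ fun a _ =>
      (continuous_apply a).comp ((continuous_apply v).comp continuous_subtype_val)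

end Postcomposition

lemma KConnected.subsingleton_homotopyGroup {k : ℤ} {X : Type} [TopologicalSpace X]
    (hX : KConnected k X) {i : ℕ} (hi : (i : ℤ) ≤ k) (x : X) :
    Subsingleton (HomotopyGroup (Fin i) X x) := by
  rcases i.eq_zero_or_pos with rfl | hi'
  · have := hX.2.1 hi
    exact HomotopyGroup.pi0EquivZerothHomotopy.subsingleton
  · exact hX.2.2 i hi' hi x

theorem KConnected.isEmpty_graphHom_completeGraph {r d : ℕ} {G : Graph}
    (hG : KConnected (d - 1) (HomComplex (oddCycle r) G)) :
    IsEmpty (GraphHom G (completeGraph (d + 2))) := by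
  refine ⟨fun c => ?_⟩
  obtain ⟨H, hH, hHend⟩ := exists_antipodal_homotopy r d
  have := hG.1
  exact not_exists_antipodal_homotopy (precompHom_invol _ (cycleReflect_invol r) G)
    (fun i hi => hG.subsingleton_homotopyGroup (by omega))
    (H.comp ((postcompHom _ c).prodMap (.id _))) (fun x t => hH (postcompHom _ c x) t)
    fun x => hHend (postcompHom _ c x)

lemma Graph.Loopless.nonempty_graphHom_chromaticNumber {G : Graph} (hG : G.Loopless) :
    Nonempty (GraphHom G (completeGraph (chromaticNumber G))) :=
  Nat.sInf_mem (s := {n | Nonempty (GraphHom G (completeGraph n))})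
    ⟨Fintype.card G.V, Fintype.equivFin G.V, fun _ y hxy h =>
      hG y ((Fintype.equivFin G.V).injective h ▸ hxy)⟩

/-- **The Lovász Conjecture** (Babson–Kozlov).  If `Hom(C_{2r+1}, G)` is `k`-connected for some
`r ≥ 1`, `k ≥ -1`, and `G` is a loopless graph, then `χ(G) ≥ k + 4`. -/
theorem lovasz_conjecture (r : ℕ) (hr : 1 ≤ r) (k : ℤ) (hk : -1 ≤ k)
    (G : Graph) (hG : G.Loopless)
    (hconn : KConnected k (HomComplex (oddCycle r) G)) :
    k + 4 ≤ (chromaticNumber G : ℤ) := by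
  obtain ⟨c⟩ := hG.nonempty_graphHom_chromaticNumber
  obtain ⟨d, rfl⟩ : ∃ d : ℕ, k = d - 1 := ⟨(k + 1).toNat, by omega⟩
  by_contra! hlt
  have hle : chromaticNumber G ≤ d + 2 := by omega
  exact hconn.isEmpty_graphHom_completeGraph.false
    ⟨Fin.castLE hle ∘ c.1, fun x y hxy => (Fin.castLE_injective hle).ne (c.2 x y hxy)⟩

end Lovasz
end
end

section
/- For any integer m ≥ 2, the independence complex of the cycle C_m is homotopy equivalent to a wedge of two spheres S^{k−1} ∨ S^{k−1} if m = 3k, and to a single sphere S^{k−1} if m = 3k ± 1. -/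
open Finset

noncomputable section
namespace Lovasz




/-- The `d`-dimensional sphere, as the unit sphere in `ℝ^{d+1}`. -/
abbrev nSphere (d : ℕ) : Type :=
  (Metric.sphere (0 : EuclideanSpace ℝ (Fin (d+1))) 1 : Set (EuclideanSpace ℝ (Fin (d+1))))

/-- The antipodal involution of the `d`-sphere. -/
def nSphereNeg (d : ℕ) : C(nSphere d, nSphere d) where
  toFun x := ⟨-x.1, by
    have hx := x.2
    rw [Metric.mem_sphere, dist_zero_right] at hx ⊢
    rwa [norm_neg]⟩
  continuous_toFun := by
    apply Continuous.subtype_mk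
    exact continuous_subtype_val.neg

lemma nSphereNeg_invol (d : ℕ) : ∀ x, nSphereNeg d (nSphereNeg d x) = x := by
  intro x
  apply Subtype.ext
  show -(-x.1) = x.1
  exact neg_neg _

/-- A base point on the `d`-sphere. -/
def northPole (d : ℕ) : nSphere d :=
  ⟨EuclideanSpace.single (0 : Fin (d+1)) (1 : ℝ), by
    rw [Metric.mem_sphere, dist_zero_right, EuclideanSpace.norm_single]
    norm_num⟩

/-- The setoid gluing `m` spheres of dimension `d` at their base points. -/
def wedgeSetoid (m d : ℕ) : Setoid (Fin m × nSphere d) where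
  r a b := a = b ∨ (a.2 = northPole d ∧ b.2 = northPole d)
  iseqv := by
    constructor
    · exact fun a => Or.inl rfl
    · rintro a b (rfl | ⟨h1, h2⟩)
      · exact Or.inl rfl
      · exact Or.inr ⟨h2, h1⟩
    · rintro a b c (rfl | ⟨h1, h2⟩) (rfl | ⟨h3, h4⟩)
      · exact Or.inl rfl
      · exact Or.inr ⟨h3, h4⟩
      · exact Or.inr ⟨h1, h2⟩
      · exact Or.inr ⟨h1, h4⟩

/-- The wedge (one-point union) of `m` copies of the `d`-sphere. -/
abbrev WedgeOfSpheres (m d : ℕ) : Type := Quotient (wedgeSetoid m d)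

/-- The setoid for the topological join `X * Y` on `X × Y × [0,1]`:
at time `0` collapse `Y`, at time `1` collapse `X`. -/
def joinSetoid (X Y : Type) [TopologicalSpace X] [TopologicalSpace Y] :
    Setoid (X × Y × unitInterval) where
  r a b := a = b ∨ (a.2.2 = 0 ∧ b.2.2 = 0 ∧ a.1 = b.1) ∨ (a.2.2 = 1 ∧ b.2.2 = 1 ∧ a.2.1 = b.2.1)
  iseqv := by
    constructor
    · exact fun a => Or.inl rfl
    · rintro a b (rfl | ⟨h1, h2, h3⟩ | ⟨h1, h2, h3⟩)
      · exact Or.inl rfl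
      · exact Or.inr (Or.inl ⟨h2, h1, h3.symm⟩)
      · exact Or.inr (Or.inr ⟨h2, h1, h3.symm⟩)
    · rintro a b c (rfl | ⟨h1, h2, h3⟩ | ⟨h1, h2, h3⟩) (rfl | ⟨h4, h5, h6⟩ | ⟨h4, h5, h6⟩)
      · exact Or.inl rfl
      · exact Or.inr (Or.inl ⟨h4, h5, h6⟩)
      · exact Or.inr (Or.inr ⟨h4, h5, h6⟩)
      · exact Or.inr (Or.inl ⟨h1, h2, h3⟩)
      · exact Or.inr (Or.inl ⟨h1, h5, h3.trans h6⟩)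
      · exact absurd (congrArg Subtype.val (h4.symm.trans h2))
          (by simp)
      · exact Or.inr (Or.inr ⟨h1, h2, h3⟩)
      · exact absurd (congrArg Subtype.val (h2.symm.trans h4))
          (by simp)
      · exact Or.inr (Or.inr ⟨h1, h5, h3.trans h6⟩)

/-- The topological join `X * Y`. -/
abbrev TopJoin (X Y : Type) [TopologicalSpace X] [TopologicalSpace Y] : Type :=
  Quotient (joinSetoid X Y)

/-- A continuous map is a homotopy equivalence. -/
def IsHomotopyEquiv {X Y : Type} [TopologicalSpace X] [TopologicalSpace Y] (f : C(X, Y)) : Prop :=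
  ∃ g : C(Y, X), (g.comp f).Homotopic (ContinuousMap.id X) ∧
    (f.comp g).Homotopic (ContinuousMap.id Y)

/-- A `ℤ/2`-equivariant homotopy equivalence between spaces with involutions, where all maps and
homotopies are equivariant. -/
def IsZ2HomotopyEquiv {X Y : Type} [TopologicalSpace X] [TopologicalSpace Y]
    (τ : C(X, X)) (ρ : C(Y, Y)) : Prop :=
  ∃ (f : C(X, Y)) (g : C(Y, X)),
    (∀ x, f (τ x) = ρ (f x)) ∧ (∀ y, g (ρ y) = τ (g y)) ∧
    (∃ H : (g.comp f).Homotopy (ContinuousMap.id X), ∀ x t, H (t, τ x) = τ (H (t, x))) ∧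
    (∃ K : (f.comp g).Homotopy (ContinuousMap.id Y), ∀ y t, K (t, ρ y) = ρ (K (t, y)))

/-!
The cone over the independence complex of a relation `r` is the set of nonnegative functions with
independent support, so the join of `Ind(r)` with a sphere is modelled by the punctured product of
this cone with a vector space `E`. Two points whose supports have an independent union can be
joined by a straight segment in such a product, which makes homotopies easy to write down.

Subdividing an edge into four edges suspends the independence complex (Csorba): the new coordinate
measures whether the middle vertex of the path or one of its two ends carries the weight. Hence
`C_{n+3}` yields the suspension of `C_n`, and everything reduces to cycles with at most three
vertices. Here `C_1` is a single vertex with a loop, whose complex is empty, and `C_2` gives the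
two points of `S^0`. For `C_3` there are three points; the join of three points with a sphere
consists of three half-spaces with a common boundary, that is, of two punctured spaces glued along
a half-space, and contracting this half-space produces the wedge of two spheres.
-/

open Set
open scoped ContinuousMap

section SegmentHomotopy

variable {X V : Type*} [AddCommGroup V] [Module ℝ V]

theorem segment_smul_self_subset_compl_zero {c : ℝ} (hc : 0 < c) {x : V} (hx : x ≠ 0) :
    segment ℝ (c • x) x ⊆ {0}ᶜ := by
  rintro _ ⟨a, b, ha, hb, hab, rfl⟩
  have hpos : 0 < a * c + b := by
    rcases ha.eq_or_lt with rfl | ha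
    · linarith
    · positivity
  rw [smul_smul, ← add_smul]
  exact smul_ne_zero hpos.ne' hx

variable [TopologicalSpace X] [TopologicalSpace V] [IsTopologicalAddGroup V] [ContinuousSMul ℝ V]

theorem homotopicWith_of_segment_subset {S B : Set V} {A : Set X} {f g : C(X, S)}
    (hS : ∀ x, segment ℝ (f x : V) (g x) ⊆ S)
    (hB : ∀ x ∈ A, segment ℝ (f x : V) (g x) ⊆ B) :
    f.HomotopicWith g fun h => MapsTo h A (Subtype.val ⁻¹' B) :=
  ⟨{toFun := fun p => ⟨AffineMap.lineMap (f p.2 : V) (g p.2 : V) (p.1 : ℝ),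
      hS p.2 (lineMap_mem_segment ℝ _ _ p.1.2)⟩
    continuous_toFun := by
      simp only [AffineMap.lineMap_apply_module]
      fun_prop
    map_zero_left := fun x => Subtype.ext (AffineMap.lineMap_apply_zero _ _)
    map_one_left := fun x => Subtype.ext (AffineMap.lineMap_apply_one _ _)
    prop' := fun t x hx => hB x hx (lineMap_mem_segment ℝ _ _ t.2)}⟩

theorem homotopic_of_segment_subset {S : Set V} {f g : C(X, S)}
    (hS : ∀ x, segment ℝ (f x : V) (g x) ⊆ S) : f.Homotopic g :=
  (homotopicWith_of_segment_subset (A := ∅) hS fun x _ => hS x).map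
    ContinuousMap.HomotopyWith.toHomotopy

end SegmentHomotopy

section IndCone

variable {V W E F : Type*} {r : V → V → Prop} {s : W → W → Prop}

/-- The cone over the independence complex of the relation `r`, realised as the nonnegative
functions with independent support. The relation need not be symmetric, and a loop at `x`
removes the vertex `x` from the complex. -/
def indCone (r : V → V → Prop) : Set (V → ℝ) :=
  {f | 0 ≤ f ∧ ∀ x y, r x y → f x = 0 ∨ f y = 0}

/-- The punctured product of the cone over `Ind(r)` with a vector space `E`. For a
finite-dimensional `E` it is, up to homotopy, the join of `Ind(r)` with the unit sphere of `E`. -/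
def indJoin (r : V → V → Prop) (E : Type*) [Zero E] : Set ((V → ℝ) × E) :=
  {z | z.1 ∈ indCone r ∧ z ≠ 0}

theorem mem_indCone_of_support {f g : V → ℝ} (hf : f ∈ indCone r) (hg : 0 ≤ g)
    (h : ∀ x, f x = 0 → g x = 0) : g ∈ indCone r :=
  ⟨hg, fun x y hxy => (hf.2 x y hxy).imp (h x) (h y)⟩

theorem comp_mem_indCone_iff {e : V ≃ W} (he : ∀ x y, r x y ↔ s (e x) (e y)) {f : W → ℝ} :
    f ∘ e ∈ indCone r ↔ f ∈ indCone s := by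
  simp only [indCone, mem_ofPred_eq, Pi.le_def, e.forall_congr_left, he, Function.comp_apply,
    Equiv.apply_symm_apply, Pi.zero_apply]

/-- Isomorphic relations and isomorphic vector spaces have homeomorphic joins. -/
def indJoinCongr [AddCommMonoid E] [Module ℝ E] [TopologicalSpace E]
    [AddCommMonoid F] [Module ℝ F] [TopologicalSpace F]
    (e : V ≃ W) (he : ∀ x y, r x y ↔ s (e x) (e y)) (L : E ≃L[ℝ] F) :
    indJoin r E ≃ₜ indJoin s F :=
  let H : (W → ℝ) × F ≃ₜ (V → ℝ) × E :=
    (Homeomorph.piCongrLeft (Y := fun _ => ℝ) e).symm.prodCongr L.symm.toHomeomorph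
  have hH : H 0 = 0 := Prod.ext rfl L.symm.map_zero
  (H.subtype fun _ =>
    and_congr (comp_mem_indCone_iff he).symm (not_congr (H.injective.eq_iff' hH).symm)).symm

theorem segment_subset_indCone {f g : V → ℝ} (hf : 0 ≤ f) (hg : 0 ≤ g)
    (hfg : f + g ∈ indCone r) : segment ℝ f g ⊆ indCone r := by
  rintro _ ⟨a, b, ha, hb, -, rfl⟩
  refine mem_indCone_of_support hfg (by positivity) fun x hx => ?_
  obtain ⟨hfx, hgx⟩ := (add_eq_zero_iff_of_nonneg (hf x) (hg x)).1 hx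
  simp [hfx, hgx]

variable [AddCommGroup E] [Module ℝ E]

theorem segment_subset_indJoin {y z : (V → ℝ) × E} (hy : y ∈ indJoin r E) (hz : z ∈ indJoin r E)
    (hE : y.2 = z.2) (hadd : y.1 + z.1 ∈ indCone r) : segment ℝ y z ⊆ indJoin r E := by
  rintro _ ⟨a, b, ha, hb, hab, rfl⟩
  refine ⟨segment_subset_indCone hy.1.1 hz.1.1 hadd ⟨a, b, ha, hb, hab, rfl⟩, fun h => ?_⟩
  obtain ⟨h₁, h₂⟩ := Prod.mk_eq_zero.1 h
  have hz₂ : z.2 = 0 := by simpa [hE, ← add_smul, hab] using h₂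
  have hy₁ : 0 ≤ a • y.1 := smul_nonneg ha hy.1.1
  have hz₁ : 0 ≤ b • z.1 := smul_nonneg hb hz.1.1
  obtain ⟨hay, hbz⟩ := (add_eq_zero_iff_of_nonneg hy₁ hz₁).1 h₁
  rcases smul_eq_zero.1 hay with rfl | hy0
  · obtain rfl : b = 1 := by simpa using hab
    exact hz.2 (Prod.ext (by simpa using hbz) hz₂)
  · exact hy.2 (Prod.ext hy0 (hE.trans hz₂))

variable [TopologicalSpace E] [IsTopologicalAddGroup E] [ContinuousSMul ℝ E]

theorem homotopic_of_add_mem_indCone {X : Type*} [TopologicalSpace X] {f g : C(X, indJoin r E)}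
    (hE : ∀ x, (f x).1.2 = (g x).1.2) (hadd : ∀ x, (f x).1.1 + (g x).1.1 ∈ indCone r) :
    f.Homotopic g :=
  homotopic_of_segment_subset fun x => segment_subset_indJoin (f x).2 (g x).2 (hE x) (hadd x)

end IndCone

section Amalgam

variable {X Y Z W : Type*} [TopologicalSpace X] [TopologicalSpace Y] [TopologicalSpace Z]
  [TopologicalSpace W]

theorem homotopicWith_mapsTo_comp {f g : C(X, Y)} {A : Set X} {B : Set Y} {C : Set W} {D : Set Z}
    (h : f.HomotopicWith g (MapsTo · A B)) {φ : C(W, X)} (hφ : MapsTo φ C A) {ψ : C(Y, Z)}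
    (hψ : MapsTo ψ B D) : (ψ.comp (f.comp φ)).HomotopicWith (ψ.comp (g.comp φ)) (MapsTo · C D) :=
  h.map fun H =>
    { toHomotopy := (ContinuousMap.Homotopy.refl ψ).comp
        (H.toHomotopy.comp (ContinuousMap.Homotopy.refl φ))
      prop' := fun t => hψ.comp ((H.prop t).comp hφ) }

/-- The equivalence relation on `ι × X` that glues `ι` copies of `X` along the subset `A`. -/
def amalgamSetoid (ι : Type*) {X : Type*} (A : Set X) : Setoid (ι × X) where
  r a b := a = b ∨ a.2 = b.2 ∧ a.2 ∈ A
  iseqv :=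
    { refl := fun _ => .inl rfl
      symm := by
        rintro a b (rfl | ⟨h, ha⟩)
        exacts [.inl rfl, .inr ⟨h.symm, h ▸ ha⟩]
      trans := by
        rintro a b c (rfl | ⟨h, ha⟩) (rfl | ⟨h', hb⟩)
        exacts [.inl rfl, .inr ⟨h', hb⟩, .inr ⟨h, ha⟩, .inr ⟨h.trans h', ha⟩] }

/-- The amalgam of `ι` copies of `X` along the subset `A`; for a point `A` this is a wedge. -/
abbrev Amalgam (ι : Type*) {X : Type*} (A : Set X) : Type _ :=
  Quotient (amalgamSetoid ι A)

variable (ι : Type*) [TopologicalSpace ι] {A : Set X} {B : Set Y}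

/-- The map of amalgams induced by a map of pairs. -/
def Amalgam.map (f : C(X, Y)) (hf : MapsTo f A B) : C(Amalgam ι A, Amalgam ι B) where
  toFun := Quotient.map (Prod.map id f) fun _ _ h =>
    h.imp (congrArg _) fun h => ⟨congrArg f h.1, hf h.2⟩
  continuous_toFun := (continuous_id.prodMap f.continuous).quotient_map' _

theorem Amalgam.homotopic_map {f g : C(X, Y)} (h : f.HomotopicWith g (MapsTo · A B))
    (hf : MapsTo f A B) (hg : MapsTo g A B) :
    (Amalgam.map ι f hf).Homotopic (Amalgam.map ι g hg) :=
  h.map fun H =>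
    { toFun := fun p => Amalgam.map ι (H.toHomotopy.curry p.1) (H.prop p.1) p.2
      continuous_toFun :=
        (isQuotientMap_quotient_mk' (s := amalgamSetoid ι A)).continuous_lift_prod_right <|
          continuous_quotient_mk'.comp <| by
            change Continuous fun p : unitInterval × ι × X => (p.2.1, H (p.1, p.2.2))
            fun_prop
      map_zero_left := by
        rintro ⟨i, x⟩
        exact congrArg (fun y => Quotient.mk (amalgamSetoid ι B) (i, y)) (H.apply_zero x)
      map_one_left := by
        rintro ⟨i, x⟩
        exact congrArg (fun y => Quotient.mk (amalgamSetoid ι B) (i, y)) (H.apply_one x) }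

theorem Amalgam.map_comp_map {f : C(X, Y)} {g : C(Y, Z)} {C : Set Z} (hf : MapsTo f A B)
    (hg : MapsTo g B C) :
    (Amalgam.map ι g hg).comp (Amalgam.map ι f hf) = Amalgam.map ι (g.comp f) (hg.comp hf) := by
  ext ⟨_, _⟩
  rfl

theorem Amalgam.map_id : Amalgam.map ι (.id X) (mapsTo_id A) = .id (Amalgam ι A) := by
  ext ⟨_, _⟩
  rfl

/-- The homotopy equivalence of amalgams induced by a homotopy equivalence of pairs. -/
def Amalgam.homotopyEquiv {f : C(X, Y)} {g : C(Y, X)} (hf : MapsTo f A B) (hg : MapsTo g B A)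
    (hgf : (g.comp f).HomotopicWith (.id X) (MapsTo · A A))
    (hfg : (f.comp g).HomotopicWith (.id Y) (MapsTo · B B)) :
    Amalgam ι A ≃ₕ Amalgam ι B where
  toFun := Amalgam.map ι f hf
  invFun := Amalgam.map ι g hg
  left_inv := by
    rw [map_comp_map, ← map_id]
    exact homotopic_map ι hgf _ _
  right_inv := by
    rw [map_comp_map, ← map_id]
    exact homotopic_map ι hfg _ _

theorem wedgeSetoid_eq_amalgamSetoid (m d : ℕ) :
    wedgeSetoid m d = amalgamSetoid (Fin m) {northPole d} :=
  Setoid.ext fun _ _ => or_congr_right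
    ⟨fun h => ⟨h.1.trans h.2.symm, h.1⟩, fun h => ⟨h.2, h.1.symm.trans h.2⟩⟩

end Amalgam

section Subdivision

open Sum

variable {V E : Type*} {r : V → V → Prop} {u w : V}

/-- The relation `r` together with an edge from `u` to `w`. -/
def WithEdge (r : V → V → Prop) (u w : V) (x y : V) : Prop :=
  r x y ∨ x = u ∧ y = w

/-- The relation `r` together with a path of four edges from `u` to `w` through three new
vertices. -/
def WithPath (r : V → V → Prop) (u w : V) : V ⊕ Fin 3 → V ⊕ Fin 3 → Prop
  | inl x, inl y => r x y
  | inl x, inr j => x = u ∧ j = 0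
  | inr i, inr j => (j : ℕ) = i + 1
  | inr i, inl y => i = 2 ∧ y = w

theorem mem_indCone_withEdge {g : V → ℝ} :
    g ∈ indCone (WithEdge r u w) ↔ g ∈ indCone r ∧ (g u = 0 ∨ g w = 0) := by
  refine ⟨fun h => ⟨⟨h.1, fun x y hxy => h.2 x y (.inl hxy)⟩, h.2 u w (.inr ⟨rfl, rfl⟩)⟩, ?_⟩
  rintro ⟨h, huw⟩
  refine ⟨h.1, ?_⟩
  rintro x y (hxy | ⟨rfl, rfl⟩)
  exacts [h.2 x y hxy, huw]

theorem mem_indCone_withPath {f : V ⊕ Fin 3 → ℝ} :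
    f ∈ indCone (WithPath r u w) ↔ f ∘ inl ∈ indCone r ∧ 0 ≤ f ∘ inr ∧
      (f (inl u) = 0 ∨ f (inr 0) = 0) ∧ (f (inr 0) = 0 ∨ f (inr 1) = 0) ∧
      (f (inr 1) = 0 ∨ f (inr 2) = 0) ∧ (f (inr 2) = 0 ∨ f (inl w) = 0) := by
  refine ⟨fun h => ⟨⟨fun x => h.1 _, fun x y => h.2 (inl x) (inl y)⟩, fun i => h.1 _,
    h.2 (inl u) (inr 0) ⟨rfl, rfl⟩, h.2 (inr 0) (inr 1) rfl, h.2 (inr 1) (inr 2) rfl,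
    h.2 (inr 2) (inl w) ⟨rfl, rfl⟩⟩, ?_⟩
  rintro ⟨hl, hr, h₁, h₂, h₃, h₄⟩
  refine ⟨fun x => x.casesOn hl.1 hr, ?_⟩
  rintro (x | i) (y | j) hxy
  · exact hl.2 x y hxy
  · rwa [hxy.1, hxy.2]
  · rwa [hxy.1, hxy.2]
  · obtain ⟨rfl, rfl⟩ | ⟨rfl, rfl⟩ : i = 0 ∧ j = 1 ∨ i = 1 ∧ j = 2 := by
      change (j : ℕ) = i + 1 at hxy
      omega
    exacts [h₂, h₃]

theorem eq_zero_of_inl_of_inr {f : V ⊕ Fin 3 → ℝ} (hV : ∀ x, f (inl x) = 0) (h₀ : f (inr 0) = 0)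
    (h₁ : f (inr 1) = 0) (h₂ : f (inr 2) = 0) : f = 0 := by
  funext x
  rcases x with x | i
  · exact hV x
  · fin_cases i <;> assumption

/-- The function obtained from `g` by lowering all its values by `m` and cutting off at `0`. -/
def truncate (m : ℝ) (g : V → ℝ) (x : V) : ℝ :=
  max (g x - m) 0

theorem truncate_eq_zero {m : ℝ} {g : V → ℝ} {x : V} (hm : 0 ≤ m) (hx : g x = 0) :
    truncate m g x = 0 := by
  simp [truncate, hx, hm]

theorem truncate_mem_indCone {m : ℝ} {g : V → ℝ} (hm : 0 ≤ m) (hg : g ∈ indCone r) :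
    truncate m g ∈ indCone r :=
  mem_indCone_of_support hg (fun _ => le_max_right _ _) fun _ => truncate_eq_zero hm

theorem truncate_add_mem_indCone {m : ℝ} {g : V → ℝ} (hm : 0 ≤ m) (hg : g ∈ indCone r) :
    truncate m g + g ∈ indCone r :=
  mem_indCone_of_support hg (add_nonneg (truncate_mem_indCone hm hg).1 hg.1) fun x hx => by
    rw [Pi.add_apply, truncate_eq_zero hm hx, hx, add_zero]

/-- The coordinate in the direction of suspension of the join over `WithPath r u w`. -/
def pathHeight (u w : V) (f : V ⊕ Fin 3 → ℝ) : ℝ :=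
  f (inr 1) + min (f (inl u)) (f (inl w)) - max (f (inr 0)) (f (inr 2))

theorem ends_eq_zero_of_pathHeight_pos {f : V ⊕ Fin 3 → ℝ} (hf : f ∈ indCone (WithPath r u w))
    (h : 0 < pathHeight u w f) : f (inr 0) = 0 ∧ f (inr 2) = 0 := by
  obtain ⟨hl, hr, h₁, h₂, h₃, h₄⟩ := mem_indCone_withPath.1 hf
  have hr₀ := hr 0
  have hr₂ := hr 2
  have hu := hl.1 u
  have hw := hl.1 w
  unfold pathHeight at h
  simp only [Pi.zero_apply, Function.comp_apply] at *
  grind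

theorem min_eq_zero_of_pathHeight_neg {f : V ⊕ Fin 3 → ℝ} (hf : f ∈ indCone (WithPath r u w))
    (h : pathHeight u w f < 0) : min (f (inl u)) (f (inl w)) = 0 := by
  obtain ⟨hl, hr, h₁, -, -, h₄⟩ := mem_indCone_withPath.1 hf
  have hr₁ := hr 1
  have hr₂ := hr 2
  have hu := hl.1 u
  have hw := hl.1 w
  unfold pathHeight at h
  simp only [Pi.zero_apply, Function.comp_apply] at *
  grind

/-- The retraction of the cone over `WithPath r u w` to the cone over `WithEdge r u w`: at least
one of the ends of the path receives the value `0`. -/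
def contractPath (u w : V) (f : V ⊕ Fin 3 → ℝ) : V → ℝ :=
  truncate (min (f (inl u)) (f (inl w))) (f ∘ inl)

theorem contractPath_mem_indCone {f : V ⊕ Fin 3 → ℝ} (hf : f ∈ indCone (WithPath r u w)) :
    contractPath u w f ∈ indCone (WithEdge r u w) := by
  have hl := (mem_indCone_withPath.1 hf).1
  refine mem_indCone_withEdge.2 ⟨truncate_mem_indCone (le_min (hl.1 u) (hl.1 w)) hl, ?_⟩
  rcases le_total (f (inl u)) (f (inl w)) with h | h
  · exact .inl (by simp [contractPath, truncate, h])
  · exact .inr (by simp [contractPath, truncate, h])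

theorem eq_zero_of_contractPath_eq_zero {f : V ⊕ Fin 3 → ℝ} (hf : f ∈ indCone (WithPath r u w))
    (h : contractPath u w f = 0) (ht : pathHeight u w f = 0) : f = 0 := by
  obtain ⟨hl, hr, h₁, h₂, h₃, h₄⟩ := mem_indCone_withPath.1 hf
  have hr₀ := hr 0
  have hr₁ := hr 1
  have hr₂ := hr 2
  have hu := hl.1 u
  have hw := hl.1 w
  simp only [pathHeight, Pi.zero_apply, Function.comp_apply] at *
  have hm : min (f (inl u)) (f (inl w)) = 0 := by grind
  have hV (x : V) : f (inl x) = 0 :=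
    le_antisymm (by simpa [contractPath, truncate, hm] using congrFun h x) (hl.1 x)
  exact eq_zero_of_inl_of_inr hV (by grind) (by grind) (by grind)

/-- The function on the subdivided vertex set with values `a`, `t⁺`, `c` at the new vertices and
`(g - t⁻)⁺` at the old ones. -/
def insertPath (t a c : ℝ) (g : V → ℝ) : V ⊕ Fin 3 → ℝ :=
  Sum.elim (truncate (max (-t) 0) g) ![a, max t 0, c]

theorem insertPath_nonneg {t a c : ℝ} (ha : 0 ≤ a) (hc : 0 ≤ c) (g : V → ℝ) :
    0 ≤ insertPath t a c g := by
  rintro (x | i)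
  · exact le_max_right _ _
  · fin_cases i
    exacts [ha, le_max_right _ _, hc]

@[fun_prop]
theorem continuous_insertPath {X : Type*} [TopologicalSpace X] {t a c : X → ℝ} {g : X → V → ℝ}
    (ht : Continuous t) (ha : Continuous a) (hc : Continuous c) (hg : Continuous g) :
    Continuous fun x => insertPath (t x) (a x) (c x) (g x) := by
  refine continuous_pi fun y => ?_
  rcases y with y | i
  · exact (((continuous_apply y).comp hg).sub (ht.neg.max continuous_const)).max continuous_const
  · fin_cases i
    exacts [ha, ht.max continuous_const, hc]

/-- The homotopy inverse of `contractPath` and `pathHeight`: at negative height `t`, the values at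
the old vertices are lowered by `-t`, and each end of the new path receives what could not be
subtracted at its neighbour `u` or `w`. -/
def expandPath (u w : V) (t : ℝ) (g : V → ℝ) : V ⊕ Fin 3 → ℝ :=
  insertPath t (max (max (-t) 0 - g u) 0) (max (max (-t) 0 - g w) 0) g

theorem expandPath_mem_indCone {g : V → ℝ} (hg : g ∈ indCone r) (t : ℝ) :
    expandPath u w t g ∈ indCone (WithPath r u w) := by
  have hu := hg.1 u
  have hw := hg.1 w
  refine mem_indCone_withPath.2 ⟨truncate_mem_indCone (le_max_right _ _) hg,
    fun i => insertPath_nonneg (le_max_right _ _) (le_max_right _ _) g (inr i), ?_⟩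
  simp only [expandPath, insertPath, elim_inl, elim_inr, truncate, Pi.zero_apply,
    Matrix.cons_val] at *
  grind

theorem eq_zero_of_expandPath_eq_zero {g : V → ℝ} {t : ℝ} (hg : g ∈ indCone (WithEdge r u w))
    (h : expandPath u w t g = 0) : g = 0 ∧ t = 0 := by
  have huw := (mem_indCone_withEdge.1 hg).2
  have h₀ : max (max (-t) 0 - g u) 0 = 0 := congrFun h (inr 0)
  have h₁ : max t 0 = 0 := congrFun h (inr 1)
  have h₂ : max (max (-t) 0 - g w) 0 = 0 := congrFun h (inr 2)
  obtain rfl : t = 0 := by grind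
  refine ⟨funext fun x => le_antisymm ?_ (hg.1 x), rfl⟩
  simpa [expandPath, insertPath, truncate] using congrFun h (inl x)

theorem pathHeight_expandPath {g : V → ℝ} (hg : g ∈ indCone (WithEdge r u w)) (t : ℝ) :
    pathHeight u w (expandPath u w t g) = t := by
  have huw := (mem_indCone_withEdge.1 hg).2
  have hu := hg.1 u
  have hw := hg.1 w
  simp only [pathHeight, expandPath, insertPath, elim_inl, elim_inr, truncate, Pi.zero_apply,
    Matrix.cons_val] at *
  grind

theorem contractPath_expandPath_add_mem_indCone {g : V → ℝ} (hg : g ∈ indCone r) (t : ℝ) :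
    contractPath u w (expandPath u w t g) + g ∈ indCone r := by
  have h := truncate_mem_indCone (le_max_right (-t) 0) hg
  refine mem_indCone_of_support hg (add_nonneg (fun _ => le_max_right _ _) hg.1) fun x hx => ?_
  rw [Pi.add_apply, hx, add_zero]
  exact truncate_eq_zero (le_min (h.1 u) (h.1 w)) (truncate_eq_zero (le_max_right _ _) hx)

/-- A function that spans a common simplex with `f` as well as with `expandPath` of the contraction
of `f`, which need not span one with each other. -/
def relaxPath (u w : V) (f : V ⊕ Fin 3 → ℝ) : V ⊕ Fin 3 → ℝ :=
  insertPath (pathHeight u w f) (f (inr 0)) (f (inr 2)) (f ∘ inl)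

theorem relaxPath_add_mem_indCone {f : V ⊕ Fin 3 → ℝ} (hf : f ∈ indCone (WithPath r u w)) :
    relaxPath u w f + f ∈ indCone (WithPath r u w) := by
  obtain ⟨hl, hr, hpath⟩ := mem_indCone_withPath.1 hf
  have hpos := ends_eq_zero_of_pathHeight_pos hf
  refine mem_indCone_withPath.2 ⟨truncate_add_mem_indCone (le_max_right _ _) hl,
    fun i => add_nonneg (insertPath_nonneg (hr 0) (hr 2) _ (inr i)) (hr i), ?_⟩
  simp only [relaxPath, insertPath, elim_inl, elim_inr, truncate, Matrix.cons_val,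
    Pi.add_apply, Function.comp_apply] at *
  grind

theorem relaxPath_mem_indCone {f : V ⊕ Fin 3 → ℝ} (hf : f ∈ indCone (WithPath r u w)) :
    relaxPath u w f ∈ indCone (WithPath r u w) :=
  have h := insertPath_nonneg (hf.1 (inr 0)) (hf.1 (inr 2)) (f ∘ inl)
  mem_indCone_of_support (relaxPath_add_mem_indCone hf) h fun x hx =>
    ((add_eq_zero_iff_of_nonneg (h x) (hf.1 x)).1 hx).1

theorem eq_zero_of_relaxPath_eq_zero {f : V ⊕ Fin 3 → ℝ} (hf : f ∈ indCone (WithPath r u w))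
    (h : relaxPath u w f = 0) : f = 0 := by
  have hb : 0 ≤ f (inr 1) := hf.1 (inr 1)
  have hm : 0 ≤ min (f (inl u)) (f (inl w)) := le_min (hf.1 _) (hf.1 _)
  have h₀ : f (inr 0) = 0 := congrFun h (inr 0)
  have h₁ : max (pathHeight u w f) 0 = 0 := congrFun h (inr 1)
  have h₂ : f (inr 2) = 0 := congrFun h (inr 2)
  have ht : pathHeight u w f = f (inr 1) + min (f (inl u)) (f (inl w)) := by
    simp [pathHeight, h₀, h₂]
  have ht₀ : pathHeight u w f = 0 := by grind
  refine eq_zero_of_inl_of_inr (fun x => le_antisymm ?_ (hf.1 _)) h₀ (by linarith) h₂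
  simpa [relaxPath, insertPath, truncate, ht₀] using congrFun h (inl x)

theorem expandPath_contractPath_add_relaxPath_mem_indCone {f : V ⊕ Fin 3 → ℝ}
    (hf : f ∈ indCone (WithPath r u w)) :
    expandPath u w (pathHeight u w f) (contractPath u w f) + relaxPath u w f ∈
      indCone (WithPath r u w) := by
  obtain ⟨hl, -, hpath⟩ := mem_indCone_withPath.1 hf
  have hpos := ends_eq_zero_of_pathHeight_pos hf
  have hneg := min_eq_zero_of_pathHeight_neg hf
  have hu := hl.1 u
  have hw := hl.1 w
  have hm : 0 ≤ min (f (inl u)) (f (inl w)) := le_min hu hw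
  have hE := expandPath_mem_indCone (u := u) (w := w) (truncate_mem_indCone hm hl)
    (pathHeight u w f)
  have hR := relaxPath_mem_indCone hf
  refine mem_indCone_withPath.2 ⟨mem_indCone_of_support hl
    (fun x => add_nonneg (hE.1 (inl x)) (hR.1 (inl x))) fun x hx => ?_,
    fun i => add_nonneg (hE.1 (inr i)) (hR.1 (inr i)), ?_⟩
  · have hneg₀ := le_max_right (-pathHeight u w f) 0
    exact add_eq_zero_iff_of_nonneg (hE.1 (inl x)) (hR.1 (inl x)) |>.2
      ⟨truncate_eq_zero hneg₀ (truncate_eq_zero hm hx), truncate_eq_zero hneg₀ hx⟩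
  · simp only [relaxPath, insertPath, elim_inl, elim_inr, truncate, Pi.zero_apply, Matrix.cons_val,
      Pi.add_apply, Function.comp_apply, expandPath, contractPath] at *
    grind

variable (r u w)

/-- The map induced by `contractPath` and `pathHeight` on joins. -/
def contractPathMap (E : Type*) [Zero E] [TopologicalSpace E] :
    C(indJoin (WithPath r u w) E, indJoin (WithEdge r u w) (ℝ × E)) where
  toFun z := ⟨(contractPath u w z.1.1, pathHeight u w z.1.1, z.1.2),
    contractPath_mem_indCone z.2.1, fun h => by
      obtain ⟨h₁, h₂⟩ := Prod.mk_eq_zero.1 h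
      obtain ⟨h₂, h₃⟩ := Prod.mk_eq_zero.1 h₂
      exact z.2.2 (Prod.ext (eq_zero_of_contractPath_eq_zero z.2.1 h₁ h₂) h₃)⟩
  continuous_toFun := by
    unfold contractPath truncate pathHeight
    fun_prop

/-- The map induced by `expandPath` on joins. -/
def expandPathMap (E : Type*) [Zero E] [TopologicalSpace E] :
    C(indJoin (WithEdge r u w) (ℝ × E), indJoin (WithPath r u w) E) where
  toFun z := ⟨(expandPath u w z.1.2.1 z.1.1, z.1.2.2),
    expandPath_mem_indCone (mem_indCone_withEdge.1 z.2.1).1 _, fun h => by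
      obtain ⟨h₁, h₂⟩ := Prod.mk_eq_zero.1 h
      obtain ⟨hg, ht⟩ := eq_zero_of_expandPath_eq_zero z.2.1 h₁
      exact z.2.2 (Prod.ext hg (Prod.ext ht h₂))⟩
  continuous_toFun := by
    unfold expandPath
    fun_prop

/-- The map induced by `relaxPath` on joins. -/
def relaxPathMap (E : Type*) [Zero E] [TopologicalSpace E] :
    C(indJoin (WithPath r u w) E, indJoin (WithPath r u w) E) where
  toFun z := ⟨(relaxPath u w z.1.1, z.1.2), relaxPath_mem_indCone z.2.1, fun h => by
    obtain ⟨h₁, h₂⟩ := Prod.mk_eq_zero.1 h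
    exact z.2.2 (Prod.ext (eq_zero_of_relaxPath_eq_zero z.2.1 h₁) h₂)⟩
  continuous_toFun := by
    unfold relaxPath pathHeight
    fun_prop

/-- Subdividing an edge into four edges suspends the independence complex, up to homotopy
(Csorba). -/
def subdivisionHomotopyEquiv (E : Type*) [AddCommGroup E] [Module ℝ E] [TopologicalSpace E]
    [IsTopologicalAddGroup E] [ContinuousSMul ℝ E] :
    indJoin (WithPath r u w) E ≃ₕ indJoin (WithEdge r u w) (ℝ × E) where
  toFun := contractPathMap r u w E
  invFun := expandPathMap r u w E
  left_inv :=
    .trans (g := relaxPathMap r u w E)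
      (homotopic_of_add_mem_indCone (fun _ => rfl) fun z =>
        expandPath_contractPath_add_relaxPath_mem_indCone z.2.1)
      (homotopic_of_add_mem_indCone (fun _ => rfl) fun z => relaxPath_add_mem_indCone z.2.1)
  right_inv :=
    homotopic_of_add_mem_indCone
      (fun z => Prod.ext (pathHeight_expandPath z.2.1 _) rfl)
      fun z => contractPath_expandPath_add_mem_indCone z.2.1 _

end Subdivision

section IndSpace

/-- For `E = 0`, the punctured cone retracts radially onto the independence complex. -/
def indSpaceHomotopyEquiv (G : Graph) (E : Type*) [AddCommGroup E] [Module ℝ E]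
    [TopologicalSpace E] [IsTopologicalAddGroup E] [ContinuousSMul ℝ E] [Subsingleton E] :
    IndSpace G ≃ₕ indJoin G.adj E :=
  have sum_pos (z : indJoin G.adj E) : 0 < ∑ v, z.1.1 v :=
    Fintype.sum_pos (lt_of_le_of_ne z.2.1.1 fun h =>
      z.2.2 (Prod.ext h.symm (Subsingleton.elim _ _)))
  { toFun :=
      { toFun := fun f => ⟨(f.1, 0), ⟨f.2.1, f.2.2.2⟩, fun h => by
          have hf := f.2.2.1
          simp [(Prod.mk_eq_zero.1 h).1] at hf⟩
        continuous_toFun := by fun_prop }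
    invFun :=
      { toFun := fun z => ⟨(∑ v, z.1.1 v)⁻¹ • z.1.1,
          fun v => smul_nonneg (inv_nonneg.2 (sum_pos z).le) (z.2.1.1 v),
          by simp [← Finset.mul_sum, (sum_pos z).ne'],
          fun x y hxy => (z.2.1.2 x y hxy).imp (fun h => by simp [h]) fun h => by simp [h]⟩
        continuous_toFun := by
          have (z : indJoin G.adj E) : ∑ v, z.1.1 v ≠ 0 := (sum_pos z).ne'
          fun_prop (disch := assumption) }
    left_inv := by
      convert ContinuousMap.Homotopic.refl _ using 1
      ext f
      simp [f.2.2.1]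
    right_inv := homotopic_of_add_mem_indCone (fun _ => Subsingleton.elim _ _) fun z => by
      refine mem_indCone_of_support z.2.1 (add_nonneg (smul_nonneg ?_ z.2.1.1) z.2.1.1) ?_
      · exact inv_nonneg.2 (sum_pos z).le
      · intro x hx
        simp [hx] }

end IndSpace

section Cycle

/-- The successor relation on `Fin (n + 1)`, whose underlying graph is a path. -/
def PathRel (n : ℕ) (i j : Fin (n + 1)) : Prop :=
  (j : ℕ) = i + 1

/-- The cyclic successor relation on `Fin (n + 1)`. -/
def CycleRel (n : ℕ) (i j : Fin (n + 1)) : Prop :=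
  j = i + 1

theorem cycleRel_iff (n : ℕ) (i j : Fin (n + 1)) :
    CycleRel n i j ↔ (j : ℕ) = if (i : ℕ) = n then 0 else (i : ℕ) + 1 := by
  simp only [CycleRel, Fin.ext_iff, Fin.val_add_one, Fin.val_last]

theorem withEdge_pathRel_iff (n : ℕ) (i j : Fin (n + 1)) :
    WithEdge (PathRel n) (Fin.last n) 0 i j ↔ CycleRel n i j := by
  simp only [WithEdge, PathRel, cycleRel_iff, Fin.ext_iff, Fin.val_last, Fin.val_zero]
  split_ifs <;> omega

theorem withPath_pathRel_iff (n : ℕ) (x y : Fin (n + 1) ⊕ Fin 3) :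
    WithPath (PathRel n) (Fin.last n) 0 x y ↔
      CycleRel (n + 3) (finSumFinEquiv (m := n + 1) x) (finSumFinEquiv (m := n + 1) y) := by
  rcases x with i | i <;> rcases y with j | j <;>
    simp only [WithPath, PathRel, cycleRel_iff, finSumFinEquiv_apply_left,
      finSumFinEquiv_apply_right, Fin.val_castAdd, Fin.val_natAdd, Fin.ext_iff, Fin.val_last,
      Fin.val_zero, Fin.val_two] <;>
    split_ifs <;> omega

theorem mem_indCone_cycleGraph_iff {n : ℕ} {f : Fin (n + 1) → ℝ} :
    f ∈ indCone (cycleGraph (n + 1)).adj ↔ f ∈ indCone (CycleRel n) := by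
  refine and_congr_right fun _ => ⟨fun h x y hxy => h x y (.inr hxy), ?_⟩
  rintro h x y (hxy | hxy)
  exacts [(h y x hxy).symm, h x y hxy]

/-- The cycle with `n + 4` vertices is obtained from the cycle with `n + 1` vertices by
subdividing one edge into four. -/
def cycleSuspension (n : ℕ) (E : Type*) [AddCommGroup E] [Module ℝ E] [TopologicalSpace E]
    [IsTopologicalAddGroup E] [ContinuousSMul ℝ E] :
    indJoin (CycleRel (n + 3)) E ≃ₕ indJoin (CycleRel n) (ℝ × E) :=
  have hpath := indJoinCongr (finSumFinEquiv (m := n + 1)) (withPath_pathRel_iff n) (.refl ℝ E)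
  have hedge := indJoinCongr (.refl _) (withEdge_pathRel_iff n) (.refl ℝ (ℝ × E))
  hpath.symm.toHomotopyEquiv.trans <|
    (subdivisionHomotopyEquiv (PathRel n) (Fin.last n) 0 E).trans hedge.toHomotopyEquiv

theorem nonempty_homotopyEquiv_indJoin_cycleRel (n k : ℕ) :
    Nonempty (IndSpace (cycleGraph (n + 3 * k + 1)) ≃ₕ indJoin (CycleRel n) (Fin k → ℝ)) := by
  induction k generalizing n with
  | zero =>
    have h : indJoin (cycleGraph (n + 1)).adj (Fin 0 → ℝ) = indJoin (CycleRel n) (Fin 0 → ℝ) :=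
      Set.ext fun z => and_congr_left' mem_indCone_cycleGraph_iff
    exact ⟨(indSpaceHomotopyEquiv _ _).trans (Homeomorph.setCongr h).toHomotopyEquiv⟩
  | succ k ih =>
    obtain ⟨e⟩ := ih (n + 3)
    rw [show n + 3 * (k + 1) + 1 = n + 3 + 3 * k + 1 by ring]
    exact ⟨e.trans <| (cycleSuspension n (Fin k → ℝ)).trans
      (indJoinCongr (.refl _) (fun _ _ => .rfl)
        (Fin.consEquivL ℝ fun _ => ℝ)).toHomotopyEquiv⟩

end Cycle

section Punctured

variable {E : Type*} [AddCommGroup E] [Module ℝ E] [TopologicalSpace E]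

/-- The unit sphere inside the punctured space `E`, in linear coordinates `e`. -/
def nSphereIncl {d : ℕ} (e : EuclideanSpace ℝ (Fin (d + 1)) ≃L[ℝ] E) :
    C(nSphere d, ({0}ᶜ : Set E)) where
  toFun s := ⟨e s, fun h => ne_zero_of_mem_unit_sphere s (e.map_eq_zero_iff.1 h)⟩
  continuous_toFun := by fun_prop

/-- The radial projection of the punctured space `E` to the unit sphere, in linear coordinates
`e`. -/
def nSphereProj {d : ℕ} (e : EuclideanSpace ℝ (Fin (d + 1)) ≃L[ℝ] E) :
    C(({0}ᶜ : Set E), nSphere d) where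
  toFun x := ⟨NormedSpace.normalize (e.symm x), mem_sphere_zero_iff_norm.2 <|
    NormedSpace.norm_normalize_eq_one_iff.2 fun h => x.2 (e.symm.map_eq_zero_iff.1 h)⟩
  continuous_toFun := by
    have (x : ({0}ᶜ : Set E)) : ‖e.symm x‖ ≠ 0 :=
      norm_ne_zero_iff.2 fun h => x.2 (e.symm.map_eq_zero_iff.1 h)
    unfold NormedSpace.normalize
    fun_prop (disch := assumption)

variable {d : ℕ} (e : EuclideanSpace ℝ (Fin (d + 1)) ≃L[ℝ] E)

theorem nSphereProj_comp_nSphereIncl : (nSphereProj e).comp (nSphereIncl e) = .id _ := by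
  ext1 s
  refine Subtype.ext ?_
  change NormedSpace.normalize (e.symm (e s)) = s
  rw [e.symm_apply_apply, NormedSpace.normalize_eq_self_of_norm_eq_one (norm_eq_of_mem_sphere s)]

theorem exists_nSphereIncl_nSphereProj_eq_smul (x : ({0}ᶜ : Set E)) :
    ∃ c : ℝ, 0 < c ∧ (nSphereIncl e (nSphereProj e x) : E) = c • (x : E) := by
  refine ⟨‖e.symm x‖⁻¹, inv_pos.2 (norm_pos_iff.2 fun h => x.2 (e.symm.map_eq_zero_iff.1 h)), ?_⟩
  change e (‖e.symm x‖⁻¹ • e.symm x) = _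
  rw [map_smul, e.apply_symm_apply]

/-- The radial projection of a punctured space to its unit sphere. -/
def nSphereHomotopyEquiv [IsTopologicalAddGroup E] [ContinuousSMul ℝ E] :
    ({0}ᶜ : Set E) ≃ₕ nSphere d where
  toFun := nSphereProj e
  invFun := nSphereIncl e
  left_inv := homotopic_of_segment_subset fun x => by
    obtain ⟨c, hc, h⟩ := exists_nSphereIncl_nSphereProj_eq_smul e x
    rw [ContinuousMap.comp_apply, h]
    exact segment_smul_self_subset_compl_zero hc x.2
  right_inv := by
    rw [nSphereProj_comp_nSphereIncl]

end Punctured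

section HalfSpace

variable {E : Type*} [NormedAddCommGroup E] [NormedSpace ℝ E]

/-- The half-space of nonnegative first coordinate in the punctured space `ℝ × E`. -/
def upperHalf (E : Type*) [Zero E] : Set ({0}ᶜ : Set (ℝ × E)) :=
  {x | 0 ≤ x.1.1}

/-- A map of the punctured space `ℝ × E` that is homotopic to the identity and carries the upper
half-space to the ray through `(1, 0)`. -/
def pushUp (E : Type*) [NormedAddCommGroup E] [NormedSpace ℝ E] :
    C(({0}ᶜ : Set (ℝ × E)), ({0}ᶜ : Set (ℝ × E))) where
  toFun x := ⟨(‖x.1.2‖ + x.1.1, max (-x.1.1) 0 • x.1.2), fun h => x.2 <| by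
    obtain ⟨h₁, h₂⟩ := Prod.mk_eq_zero.1 h
    have hnorm := norm_nonneg x.1.2
    rcases smul_eq_zero.1 h₂ with h₂ | h₂
    · exact Prod.ext (by rw [Prod.fst_zero]; grind) (norm_eq_zero.1 (by grind))
    · exact Prod.ext (by simpa [h₂] using h₁) h₂⟩
  continuous_toFun := by fun_prop

theorem segment_smul_pushUp_subset {c : ℝ} (hc : 0 < c) (x : ({0}ᶜ : Set (ℝ × E))) :
    segment ℝ (c • (pushUp E x : ℝ × E)) x ⊆ {0}ᶜ := by
  obtain ⟨⟨h, v⟩, hx⟩ := x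
  by_cases hv : v = 0
  · have hfix : (pushUp E ⟨(h, v), hx⟩ : ℝ × E) = (h, v) := by simp [pushUp, hv]
    rw [hfix]
    exact segment_smul_self_subset_compl_zero hc hx
  rintro _ ⟨a, b, ha, hb, hab, rfl⟩ h0
  obtain ⟨h₁, h₂⟩ := Prod.mk_eq_zero.1 h0
  have hcoef : a * (c * max (-h) 0) + b = 0 :=
    (smul_eq_zero.1 (by rw [← h₂]; simp [pushUp, add_smul, mul_smul])).resolve_right hv
  have hprod : 0 ≤ a * (c * max (-h) 0) := by positivity
  obtain rfl : b = 0 := by linarith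
  obtain rfl : a = 1 := by linarith
  have hh : 0 ≤ h := by
    have : c * max (-h) 0 = 0 := by linarith
    simpa [hc.ne'] using this
  have hsum : c * (‖v‖ + h) = 0 := by simpa [pushUp] using h₁
  have : 0 < ‖v‖ := norm_pos_iff.2 hv
  exact (by positivity : 0 < c * (‖v‖ + h)).ne' hsum

theorem pushUp_of_mem_upperHalf {x : ({0}ᶜ : Set (ℝ × E))} (hx : x ∈ upperHalf E) :
    (pushUp E x : ℝ × E) = (‖x.1.2‖ + x.1.1) • (1, 0) :=
  Prod.ext (mul_one _).symm (by
    have : max (-x.1.1) 0 = 0 := max_eq_right (neg_nonpos.2 hx)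
    simp [pushUp, this])

variable {d : ℕ} {e : EuclideanSpace ℝ (Fin (d + 1)) ≃L[ℝ] ℝ × E}

theorem nSphereProj_eq_northPole (he : e (northPole d) = (1, 0)) {x : ({0}ᶜ : Set (ℝ × E))}
    {c : ℝ} (hc : 0 < c) (hx : (x : ℝ × E) = c • (1, 0)) : nSphereProj e x = northPole d := by
  refine Subtype.ext ?_
  change NormedSpace.normalize (e.symm x) = northPole d
  rw [hx, map_smul, ← he, e.symm_apply_apply, NormedSpace.normalize_smul_of_pos hc,
    NormedSpace.normalize_eq_self_of_norm_eq_one (norm_eq_of_mem_sphere (northPole d))]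

theorem mapsTo_nSphereProj_comp_pushUp (he : e (northPole d) = (1, 0)) :
    MapsTo ((nSphereProj e).comp (pushUp E)) (upperHalf E) {northPole d} := by
  intro x hx
  refine nSphereProj_eq_northPole he (lt_of_le_of_ne (add_nonneg (norm_nonneg _) hx) fun h => ?_)
    (pushUp_of_mem_upperHalf hx)
  exact (pushUp E x).2 (by rw [pushUp_of_mem_upperHalf hx, ← h, zero_smul]; rfl)

theorem mapsTo_nSphereIncl (he : e (northPole d) = (1, 0)) :
    MapsTo (nSphereIncl e) {northPole d} (Subtype.val ⁻¹' {((1, 0) : ℝ × E)}) := by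
  rintro _ rfl
  exact he

theorem pushUp_homotopicWith_id :
    (pushUp E).HomotopicWith (.id _)
      (MapsTo · (Subtype.val ⁻¹' {((1, 0) : ℝ × E)}) (Subtype.val ⁻¹' {((1, 0) : ℝ × E)})) :=
  homotopicWith_of_segment_subset
    (fun x => by simpa using segment_smul_pushUp_subset one_pos x) fun x hx => by
    have hfix : (pushUp E x : ℝ × E) = (1, 0) := by
      obtain ⟨_, _⟩ := x
      obtain rfl := hx
      simp [pushUp]
    rw [ContinuousMap.id_apply, hfix, hx, segment_same]

theorem nSphereIncl_comp_homotopicWith_id :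
    ((nSphereIncl e).comp ((nSphereProj e).comp (pushUp E))).HomotopicWith (.id _)
      (MapsTo · (upperHalf E) (upperHalf E)) := by
  refine homotopicWith_of_segment_subset (B := {z : ℝ × E | 0 ≤ z.1}) (fun x => ?_)
    fun x hx => ?_ <;>
    obtain ⟨c, hc, h⟩ := exists_nSphereIncl_nSphereProj_eq_smul e (pushUp E x) <;>
    rw [ContinuousMap.comp_apply, ContinuousMap.comp_apply, h]
  · exact segment_smul_pushUp_subset hc x
  · refine ((convex_halfSpace_ge (LinearMap.fst ℝ ℝ E).isLinear 0).segment_subset ?_ hx)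
    exact mul_nonneg hc.le (add_nonneg (norm_nonneg _) hx)

theorem nSphereProj_comp_homotopicWith_id (he : e (northPole d) = (1, 0)) :
    (((nSphereProj e).comp (pushUp E)).comp (nSphereIncl e)).HomotopicWith (.id _)
      (MapsTo · {northPole d} {northPole d}) := by
  have hproj : MapsTo (nSphereProj e) (Subtype.val ⁻¹' {((1, 0) : ℝ × E)}) {northPole d} :=
    fun x hx => nSphereProj_eq_northPole he one_pos (by rw [one_smul]; exact hx)
  rw [← nSphereProj_comp_nSphereIncl e]
  exact homotopicWith_mapsTo_comp pushUp_homotopicWith_id (mapsTo_nSphereIncl he) hproj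

theorem nonempty_amalgam_upperHalf_homotopyEquiv_wedgeOfSpheres (m : ℕ)
    (he : e (northPole d) = (1, 0)) :
    Nonempty (Amalgam (Fin m) (upperHalf E) ≃ₕ WedgeOfSpheres m d) := by
  have hincl : MapsTo (nSphereIncl e) {northPole d} (upperHalf E) :=
    (mapsTo_nSphereIncl he).mono_right fun x (hx : (x : ℝ × E) = (1, 0)) => by
      simp [upperHalf, hx]
  unfold WedgeOfSpheres
  rw [wedgeSetoid_eq_amalgamSetoid]
  exact ⟨Amalgam.homotopyEquiv (Fin m) (mapsTo_nSphereProj_comp_pushUp he) hincl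
    nSphereIncl_comp_homotopicWith_id (nSphereProj_comp_homotopicWith_id he)⟩

end HalfSpace

section SmallCycles

theorem eq_zero_of_mem_indCone_cycleRel_zero {f : Fin 1 → ℝ} (hf : f ∈ indCone (CycleRel 0)) :
    f = 0 :=
  funext fun i => or_self_iff.1 (hf.2 i i (Subsingleton.elim (α := Fin 1) _ _))

theorem mem_indCone_cycleRel_one {f : Fin 2 → ℝ} :
    f ∈ indCone (CycleRel 1) ↔ (0 ≤ f 0 ∧ 0 ≤ f 1) ∧ (f 0 = 0 ∨ f 1 = 0) := by
  refine ⟨fun h => ⟨⟨h.1 0, h.1 1⟩, h.2 0 1 rfl⟩, fun h => ⟨Fin.forall_fin_two.2 h.1, ?_⟩⟩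
  rintro i _ rfl
  fin_cases i
  exacts [h.2, h.2.symm]

theorem mem_indCone_cycleRel_two {f : Fin 3 → ℝ} :
    f ∈ indCone (CycleRel 2) ↔ (0 ≤ f 0 ∧ 0 ≤ f 1 ∧ 0 ≤ f 2) ∧
      (f 0 = 0 ∨ f 1 = 0) ∧ (f 1 = 0 ∨ f 2 = 0) ∧ (f 2 = 0 ∨ f 0 = 0) := by
  refine ⟨fun h => ⟨⟨h.1 0, h.1 1, h.1 2⟩, h.2 0 1 rfl, h.2 1 2 rfl, h.2 2 0 rfl⟩, ?_⟩
  rintro ⟨⟨h₀, h₁, h₂⟩, h₀₁, h₁₂, h₂₀⟩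
  constructor
  · intro i
    fin_cases i <;> assumption
  · rintro i _ rfl
    fin_cases i <;> assumption

variable (E : Type*) [Zero E] [TopologicalSpace E]

/-- The independence complex of the cycle with one vertex (a loop) is empty. -/
def indJoinCycleRelZeroHomeomorph : indJoin (CycleRel 0) E ≃ₜ ({0}ᶜ : Set E) where
  toFun z := ⟨z.1.2, fun h =>
    z.2.2 (Prod.ext (eq_zero_of_mem_indCone_cycleRel_zero z.2.1) h)⟩
  invFun v := ⟨(0, v), ⟨le_rfl, fun _ _ _ => .inl rfl⟩, fun h => v.2 (Prod.mk_eq_zero.1 h).2⟩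
  left_inv z := Subtype.ext (Prod.ext (eq_zero_of_mem_indCone_cycleRel_zero z.2.1).symm rfl)
  right_inv _ := rfl

/-- The independence complex of the cycle with two vertices is a pair of points. -/
def indJoinCycleRelOneHomeomorph : indJoin (CycleRel 1) E ≃ₜ ({0}ᶜ : Set (ℝ × E)) where
  toFun z := ⟨(z.1.1 0 - z.1.1 1, z.1.2), fun h => by
    obtain ⟨h₁, h₂⟩ := Prod.mk_eq_zero.1 h
    have := mem_indCone_cycleRel_one.1 z.2.1
    refine z.2.2 (Prod.ext (funext (Fin.forall_fin_two.2 ?_)) h₂)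
    simp only [Prod.fst_zero, Pi.zero_apply]
    grind⟩
  invFun v := ⟨(![max v.1.1 0, max (-v.1.1) 0], v.1.2), mem_indCone_cycleRel_one.2 
    ⟨⟨le_max_right _ _, le_max_right _ _⟩, by
      simp only [Matrix.cons_val]
      grind⟩,
    fun h => v.2 <| by
      obtain ⟨h₁, h₂⟩ := Prod.mk_eq_zero.1 h
      have h₀ : max v.1.1 0 = 0 := congrFun h₁ 0
      have h₁ : max (-v.1.1) 0 = 0 := congrFun h₁ 1
      exact Prod.ext (by rw [Prod.fst_zero]; grind) h₂⟩
  left_inv z := by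
    have := mem_indCone_cycleRel_one.1 z.2.1
    refine Subtype.ext (Prod.ext (funext (Fin.forall_fin_two.2 ?_)) rfl)
    simp only [Matrix.cons_val]
    grind
  right_inv v := by
    refine Subtype.ext (Prod.ext ?_ rfl)
    simp only [Matrix.cons_val]
    grind
  continuous_toFun := by fun_prop
  continuous_invFun := by fun_prop

end SmallCycles

section Triangle

/-- The point at height `t` on the broken line through the vertices `2` and `i` of the triangle. -/
def triangleLeg (i : Fin 2) (t : ℝ) : Fin 3 → ℝ :=
  ![if i = 0 then max (-t) 0 else 0, if i = 0 then 0 else max (-t) 0, max t 0]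

/-- The coordinate on the cone over the vertices of the triangle in which `triangleLeg`
parametrises its broken lines. -/
def triangleHeight (f : Fin 3 → ℝ) : ℝ :=
  f 2 - f 0 - f 1

/-- The index of a broken line `triangleLeg` that contains `f`. -/
def triangleSide (f : Fin 3 → ℝ) : Fin 2 :=
  if f 0 ≤ f 1 then 1 else 0

theorem triangleLeg_mem_indCone (i : Fin 2) (t : ℝ) : triangleLeg i t ∈ indCone (CycleRel 2) := by
  refine mem_indCone_cycleRel_two.2 ?_
  simp only [triangleLeg, Matrix.cons_val]
  grind

theorem triangleHeight_triangleLeg (i : Fin 2) (t : ℝ) : triangleHeight (triangleLeg i t) = t := by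
  simp only [triangleHeight, triangleLeg, Matrix.cons_val]
  grind

theorem triangleLeg_triangleHeight {f : Fin 3 → ℝ} (hf : f ∈ indCone (CycleRel 2)) :
    triangleLeg (triangleSide f) (triangleHeight f) = f := by
  have hcases := mem_indCone_cycleRel_two.1 hf
  funext j
  fin_cases j <;>
    simp only [triangleLeg, triangleSide, triangleHeight, Matrix.cons_val, Fin.zero_eta,
      Fin.mk_one, Fin.reduceFinMk] <;>
    grind

theorem triangleSide_triangleLeg (i : Fin 2) {t : ℝ} (ht : t < 0) :
    triangleSide (triangleLeg i t) = i := by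
  simp only [triangleSide, triangleLeg, Matrix.cons_val]
  grind

theorem triangleLeg_eq_of_nonneg (i j : Fin 2) {t : ℝ} (ht : 0 ≤ t) :
    triangleLeg i t = triangleLeg j t := by
  simp [triangleLeg, ht]

theorem continuous_triangleLeg (i : Fin 2) : Continuous (triangleLeg i) := by
  unfold triangleLeg
  split_ifs <;> fun_prop

theorem eq_zero_of_triangleHeight_eq_zero {f : Fin 3 → ℝ} (hf : f ∈ indCone (CycleRel 2))
    (h : triangleHeight f = 0) : f = 0 := by
  rw [← triangleLeg_triangleHeight hf, h]
  simp [triangleLeg]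

theorem triangleHeight_nonneg_of_eq {f : Fin 3 → ℝ} (hf : f ∈ indCone (CycleRel 2))
    (h : f 0 = f 1) : 0 ≤ triangleHeight f := by
  have hcases := mem_indCone_cycleRel_two.1 hf
  unfold triangleHeight
  grind

variable (E : Type*) [Zero E] [TopologicalSpace E]

/-- The vector-space coordinates of `indJoin (CycleRel 2) E` on either of its two sheets. -/
def triangleCoord : C(indJoin (CycleRel 2) E, ({0}ᶜ : Set (ℝ × E))) where
  toFun z := ⟨(triangleHeight z.1.1, z.1.2), fun h => by
    obtain ⟨h₁, h₂⟩ := Prod.mk_eq_zero.1 h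
    exact z.2.2 (Prod.ext (eq_zero_of_triangleHeight_eq_zero z.2.1 h₁) h₂)⟩
  continuous_toFun := by
    unfold triangleHeight
    fun_prop

/-- The sheet of `indJoin (CycleRel 2) E` with index `i`. -/
def triangleSheet (i : Fin 2) : C(({0}ᶜ : Set (ℝ × E)), indJoin (CycleRel 2) E) where
  toFun x := ⟨(triangleLeg i x.1.1, x.1.2), triangleLeg_mem_indCone i x.1.1, fun h => by
    obtain ⟨h₁, h₂⟩ := Prod.mk_eq_zero.1 h
    refine x.2 (Prod.ext ?_ h₂)
    rw [← triangleHeight_triangleLeg i x.1.1, h₁]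
    simp [triangleHeight]⟩
  continuous_toFun := by
    have := continuous_triangleLeg i
    fun_prop

/-- The independence complex of the triangle consists of three points, hence its joins are two
punctured spaces glued along a half-space. -/
def indJoinCycleRelTwoHomeomorph :
    indJoin (CycleRel 2) E ≃ₜ Amalgam (Fin 2) (upperHalf E) where
  toFun z := Quotient.mk _ (triangleSide z.1.1, triangleCoord E z)
  invFun := Quotient.lift (fun p => triangleSheet E p.1 p.2) <| by
    rintro ⟨i, x⟩ ⟨j, y⟩ (h | ⟨rfl : x = y, hx⟩)
    · rw [h]
    · exact Subtype.ext (Prod.ext (triangleLeg_eq_of_nonneg i j hx) rfl)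
  left_inv z := Subtype.ext (Prod.ext (triangleLeg_triangleHeight z.2.1) rfl)
  right_inv := by
    rintro ⟨i, x⟩
    have hx : triangleCoord E (triangleSheet E i x) = x :=
      Subtype.ext (Prod.ext (triangleHeight_triangleLeg i x.1.1) rfl)
    refine Quotient.sound ?_
    rcases lt_or_ge x.1.1 0 with h | h
    · exact .inl (Prod.ext (triangleSide_triangleLeg i h) hx)
    · exact .inr ⟨hx, hx.symm ▸ h⟩
  continuous_toFun := by
    have hcont (i : Fin 2) : Continuous fun z : indJoin (CycleRel 2) E =>
        Quotient.mk (amalgamSetoid (Fin 2) (upperHalf E)) (i, triangleCoord E z) :=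
      continuous_quotient_mk'.comp (by fun_prop)
    refine Continuous.congr (Continuous.if_le (hcont 1) (hcont 0) (f := fun z => z.1.1 0)
      (g := fun z => z.1.1 1) (by fun_prop) (by fun_prop) fun z hz => ?_) fun z => ?_
    · exact Quotient.sound (.inr ⟨rfl, triangleHeight_nonneg_of_eq z.2.1 hz⟩)
    · exact (apply_ite (fun i => Quotient.mk _ (i, triangleCoord E z)) _ _ _).symm
  continuous_invFun := by
    refine Continuous.quotient_lift ?_ _
    exact continuous_prod_of_discrete_left.2 fun i => (triangleSheet E i).continuous

end Triangle

/-- The homotopy type of the independence complex of a cycle (Kozlov):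
`Ind(C_m) ≃ S^{k-1} ∨ S^{k-1}` if `m = 3k`, and `Ind(C_m) ≃ S^{k-1}` if `m = 3k ± 1`. -/
theorem ind_cycle_homotopy_type (m k : ℕ) (hm : 2 ≤ m) :
    (m = 3 * k → Nonempty (ContinuousMap.HomotopyEquiv
        (IndSpace (cycleGraph m)) (WedgeOfSpheres 2 (k - 1)))) ∧
    ((m = 3 * k + 1 ∨ m = 3 * k - 1) → Nonempty (ContinuousMap.HomotopyEquiv
        (IndSpace (cycleGraph m)) (nSphere (k - 1)))) := by
  rcases k with _ | d
  · exact ⟨fun h => by omega, fun h => by omega⟩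
  let e₁ : EuclideanSpace ℝ (Fin (d + 1)) ≃L[ℝ] (Fin (d + 1) → ℝ) := EuclideanSpace.equiv _ ℝ
  let e₂ : EuclideanSpace ℝ (Fin (d + 1)) ≃L[ℝ] ℝ × (Fin d → ℝ) :=
    e₁.trans (Fin.consEquivL ℝ fun _ => ℝ).symm
  refine ⟨?_, ?_⟩
  · rintro rfl
    obtain ⟨h⟩ := nonempty_homotopyEquiv_indJoin_cycleRel 2 d
    obtain ⟨h'⟩ := nonempty_amalgam_upperHalf_homotopyEquiv_wedgeOfSpheres (e := e₂) 2 <| by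
      exact Prod.ext rfl (funext fun _ => rfl)
    rw [show 3 * (d + 1) = 2 + 3 * d + 1 by ring]
    exact ⟨h.trans ((indJoinCycleRelTwoHomeomorph _).toHomotopyEquiv.trans h')⟩
  · rintro (rfl | rfl)
    · obtain ⟨h⟩ := nonempty_homotopyEquiv_indJoin_cycleRel 0 (d + 1)
      rw [show 3 * (d + 1) + 1 = 0 + 3 * (d + 1) + 1 by ring]
      exact ⟨h.trans ((indJoinCycleRelZeroHomeomorph _).toHomotopyEquiv.trans
        (nSphereHomotopyEquiv e₁))⟩
    · obtain ⟨h⟩ := nonempty_homotopyEquiv_indJoin_cycleRel 1 d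
      rw [show 3 * (d + 1) - 1 = 1 + 3 * d + 1 by omega]
      exact ⟨h.trans ((indJoinCycleRelOneHomeomorph _).toHomotopyEquiv.trans
        (nSphereHomotopyEquiv e₂))⟩

end Lovasz
end
end
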